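/- arXiv:math/0102010 — 2 statements merged into one kernel-verified Lean document; each statement's English description precedes it below -/
import Mathlib

section
/- The map b ⊳ x = λ⁻¹ E_{M₁}(b x e₂) (b ∈ B, x ∈ M₁) defines a left action of the weak Hopf algebra B on M₁ making M₁ a left B-module algebra; this action is characterized by b ⊳ (m a) = m ⟨a₍₂₎, b⟩ a₍₁₎ for all m ∈ M and a ∈ A (where a₍₁₎ ⊗ a₍₂₎ denotes the comultiplication of A dual to the multiplication of B); it satisfies b ⊳ x = b₍₁₎ x S(b₍₂₎) for all b ∈ B and x ∈ M₁; and the invariant subalgebra is M₁^B = M. -/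
/-!
The proof rests on one observation: `b x e₂ = (b ⊳ x) e₂` by the Pimsner–Popa relation, and an
element of `M₂ = M₁ e₂ M₁` is determined by its left multiplication on `M₁ e₂`. Module axioms, `M`-linearity of the action on
both sides and `e₂ ⊳ x = E_M(x)` are immediate. Conversely, every `M`-bimodule endomorphism of
`M₁` is the action of some `b ∈ B` (`exists_B`), because `∑ zⱼ e₂ wⱼ = 1`. The pairing becomes
`⟨a, b⟩ = λ⁻¹ T((b ⊳ a) e₁ w)`, and its non-degeneracy on both sides (`pr_nondegA`,
`pr_nondegB`) is obtained from that of `T` on `A` and on `B` and from the conditional expectation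
`c ↦ λ ∑ xᵢ c yᵢ` of `C` onto `B`.

*Measuring, unit, invariants.* A tensor in `B ⊗ B` is determined by its pairings with `A ⊗ A`.
Hence, if `b a = ∑ (βᵢ ⊳ a) vᵢ` with `βᵢ, vᵢ ∈ B`, then `Δ(b)` is `∑ βᵢ ⊗ vᵢ` with the
separability element of `V` inserted (`Delta_of_mul`). Writing `b x` in the dual bases of `E_{M₁}`
gives such a decomposition, whence `b x = (b₍₁₎ ⊳ x) b₍₂₎` (`mul_eq_sum_act`); multiplying by
`y e₂` yields the measuring axiom. With `b = 1` one finds `ε(1₍₁₎ b) 1₍₂₎ = b ⊳ 1`, so `x` is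
invariant iff `b ⊳ x = (b ⊳ 1) x` for all `b`; taking `b = e₂` gives `x = E_M(x)`.

*Antipode.* The definition of `S` amounts to `E_{M₁}(e₂ w x S(b)) = λ w (b ⊳ x)` (`EM1_S`). On the
other side, `e₁ w b a = e₁ w ⟨a, b₍₁₎⟩ b₍₂₎` (`e1_w_mul`) leads to the dual commutation rule
`winv_mul_w_mul`, which expresses `w⁻¹ x w b` through `b₍₂₎` and `E_{M₁}(e₂ x w b₍₁₎)`. Since `C` is
spanned by elements `y e₂ x w` with `x, y ∈ A` and `T` is non-degenerate on `C`, the formula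
`b ⊳ a = b₍₁₎ a S(b₍₂₎)` is checked by tracing both sides against such elements and applying
these two identities. It extends from `A` to `M₁ = M A`.
-/

open scoped TensorProduct
open TensorProduct

/-- A symmetric Markov extension `N ⊆ M` of `k`-algebras satisfying the symmetric
product and weak irreducibility assumptions, together with its Jones tower
`N ⊆ M ⊆ M₁ ⊆ M₂` (the ambient algebra `R` plays the role of `M₂`), the
normalized trace `T = T₂` and the depth two conditions. -/
structure D2 (k : Type*) [Field k] (R : Type*) [Ring R] [Algebra k R] where
  N : Subalgebra k R
  M : Subalgebra k R
  M1 : Subalgebra k R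
  hNM : N ≤ M
  hMM1 : M ≤ M1
  E : R →ₗ[k] R
  EM : R →ₗ[k] R
  EM1 : R →ₗ[k] R
  lam : k
  lam_ne : lam ≠ 0
  e1 : R
  e2 : R
  T : R →ₗ[k] k
  -- Markov extension data for E : M → N
  nE : ℕ
  xb : Fin nE → R
  yb : Fin nE → R
  hxb : ∀ i, xb i ∈ M
  hyb : ∀ i, yb i ∈ M
  hE_mem : ∀ x ∈ M, E x ∈ N
  hE_one : E 1 = 1
  hE_left : ∀ n ∈ N, ∀ x ∈ M, E (n * x) = n * E x
  hE_right : ∀ n ∈ N, ∀ x ∈ M, E (x * n) = E x * n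
  hdual1 : ∀ m ∈ M, ∑ i, E (m * xb i) * yb i = m
  hdual2 : ∀ m ∈ M, ∑ i, xb i * E (yb i * m) = m
  hindex : ∑ i, xb i * yb i = lam⁻¹ • (1 : R)
  hindex' : ∑ i, yb i * xb i = lam⁻¹ • (1 : R)
  -- the normalized trace (T₂ on M₂ = R; it restricts to T on N, T₀ on M, T₁ on M₁)
  hT_one : T 1 = 1
  hT_tr : ∀ x y : R, T (x * y) = T (y * x)
  hTE : ∀ x ∈ M, T (E x) = T x
  hTEM : ∀ x ∈ M1, T (EM x) = T x
  hTEM1 : ∀ x : R, T (EM1 x) = T x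
  -- symmetry of the Markov extension: E u = u E for all u ∈ U = C_M(N)
  hsymm : ∀ u ∈ M, (∀ y ∈ N, u * y = y * u) → ∀ x ∈ M, E (u * x) = E (x * u)
  -- the basic construction M₁ = M e₁ M
  he1_mem : e1 ∈ M1
  he1_idem : e1 * e1 = e1
  he1_N : ∀ y ∈ N, e1 * y = y * e1
  hM1_gen : M1.toSubmodule = Submodule.span k {z : R | ∃ m ∈ M, ∃ m' ∈ M, z = m * e1 * m'}
  hEM_mem : ∀ x ∈ M1, EM x ∈ M
  hEM_one : EM 1 = 1
  hEM_left : ∀ m ∈ M, ∀ x ∈ M1, EM (m * x) = m * EM x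
  hEM_right : ∀ m ∈ M, ∀ x ∈ M1, EM (x * m) = EM x * m
  hEM_e1 : ∀ m ∈ M, ∀ m' ∈ M, EM (m * e1 * m') = lam • (m * m')
  he1_jones : ∀ x ∈ M, e1 * x * e1 = e1 * E x
  he1_jones' : ∀ x ∈ M, e1 * E x = E x * e1
  -- the iterated basic construction M₂ = M₁ e₂ M₁ (M₂ = R is the ambient algebra)
  he2_idem : e2 * e2 = e2
  he2_M : ∀ m ∈ M, e2 * m = m * e2
  hM2_gen : (⊤ : Submodule k R) = Submodule.span k {z : R | ∃ x ∈ M1, ∃ y ∈ M1, z = x * e2 * y}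
  hEM1_mem : ∀ x : R, EM1 x ∈ M1
  hEM1_one : EM1 1 = 1
  hEM1_left : ∀ m ∈ M1, ∀ x : R, EM1 (m * x) = m * EM1 x
  hEM1_right : ∀ m ∈ M1, ∀ x : R, EM1 (x * m) = EM1 x * m
  hEM1_e2 : ∀ x ∈ M1, ∀ y ∈ M1, EM1 (x * e2 * y) = lam • (x * y)
  he2_jones : ∀ x ∈ M1, e2 * x * e2 = e2 * EM x
  he2_jones' : ∀ x ∈ M1, e2 * EM x = EM x * e2
  -- braid-like relations and Pimsner-Popa relations
  hbraid1 : e1 * e2 * e1 = lam • e1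
  hbraid2 : e2 * e1 * e2 = lam • e2
  hPP1 : ∀ x ∈ M1, x * e1 = lam⁻¹ • (EM (x * e1) * e1)
  hPP1' : ∀ x ∈ M1, e1 * x = lam⁻¹ • (e1 * EM (e1 * x))
  hPP2 : ∀ x : R, x * e2 = lam⁻¹ • (EM1 (x * e2) * e2)
  hPP2' : ∀ x : R, e2 * x = lam⁻¹ • (e2 * EM1 (e2 * x))
  -- weak irreducibility: U = C_M(N) is Kanzaki separable with symmetric
  -- separability element ∑ sp i ⊗ sq i, and T₀ = T|U is non-degenerate on U
  nS : ℕ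
  sp : Fin nS → R
  sq : Fin nS → R
  hsp : ∀ i, sp i ∈ M ∧ ∀ y ∈ N, sp i * y = y * sp i
  hsq : ∀ i, sq i ∈ M ∧ ∀ y ∈ N, sq i * y = y * sq i
  hsep_one : ∑ i, sp i * sq i = 1
  hsep_cas : ∀ u ∈ M, (∀ y ∈ N, u * y = y * u) →
      ∑ i, (u * sp i) ⊗ₜ[k] sq i = ∑ i, sp i ⊗ₜ[k] (sq i * u)
  hsep_symm : ∑ i, sp i ⊗ₜ[k] sq i = ∑ i, sq i ⊗ₜ[k] sp i
  hU_nondeg : ∀ u ∈ M, (∀ y ∈ N, u * y = y * u) →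
      (∀ u' ∈ M, (∀ y ∈ N, u' * y = y * u') → T (u * u') = 0) → u = 0
  -- depth two conditions
  nA : ℕ
  zb : Fin nA → R
  wb : Fin nA → R
  hzb : ∀ j, zb j ∈ M1 ∧ ∀ y ∈ N, zb j * y = y * zb j
  hwb : ∀ j, wb j ∈ M1 ∧ ∀ y ∈ N, wb j * y = y * wb j
  hdualA1 : ∀ x ∈ M1, ∑ j, EM (x * zb j) * wb j = x
  hdualA2 : ∀ x ∈ M1, ∑ j, zb j * EM (wb j * x) = x
  nB : ℕ
  ub : Fin nB → R
  vb : Fin nB → R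
  hub : ∀ i, ∀ y ∈ M, ub i * y = y * ub i
  hvb : ∀ i, ∀ y ∈ M, vb i * y = y * vb i
  hdualB1 : ∀ x : R, ∑ i, EM1 (x * ub i) * vb i = x
  hdualB2 : ∀ x : R, ∑ i, ub i * EM1 (vb i * x) = x

namespace D2

variable {k : Type*} [Field k] {R : Type*} [Ring R] [Algebra k R]

/-- `U = C_M(N)`. -/
def U (D : D2 k R) : Subalgebra k R := D.M ⊓ Subalgebra.centralizer k (D.N : Set R)

/-- `V = C_{M₁}(M)`. -/
def V (D : D2 k R) : Subalgebra k R := D.M1 ⊓ Subalgebra.centralizer k (D.M : Set R)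

/-- `W = C_{M₂}(M₁)`. -/
def W (D : D2 k R) : Subalgebra k R := Subalgebra.centralizer k (D.M1 : Set R)

/-- `A = C_{M₁}(N)`. -/
def A (D : D2 k R) : Subalgebra k R := D.M1 ⊓ Subalgebra.centralizer k (D.N : Set R)

/-- `B = C_{M₂}(M)`. -/
def B (D : D2 k R) : Subalgebra k R := Subalgebra.centralizer k (D.M : Set R)

/-- `C = C_{M₂}(N)`. -/
def C (D : D2 k R) : Subalgebra k R := Subalgebra.centralizer k (D.N : Set R)

end D2
/-- Extension of the depth two setting by the symmetric separability element
`f = ∑ f1 i ⊗ f2 i` of `V = C_{M₁}(M)` and the invertible central element `w` of `V`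
such that `f⁽¹⁾ ⊗ w f⁽²⁾` is the dual bases tensor of the trace `T` on `V`. -/
structure D2S (k : Type*) [Field k] (R : Type*) [Ring R] [Algebra k R] extends D2 k R where
  nV : ℕ
  f1 : Fin nV → R
  f2 : Fin nV → R
  hf1 : ∀ i, f1 i ∈ M1 ∧ ∀ y ∈ M, f1 i * y = y * f1 i
  hf2 : ∀ i, f2 i ∈ M1 ∧ ∀ y ∈ M, f2 i * y = y * f2 i
  hf_one : ∑ i, f1 i * f2 i = 1
  hf_cas : ∀ v ∈ M1, (∀ y ∈ M, v * y = y * v) →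
      ∑ i, (v * f1 i) ⊗ₜ[k] f2 i = ∑ i, f1 i ⊗ₜ[k] (f2 i * v)
  hf_symm : ∑ i, f1 i ⊗ₜ[k] f2 i = ∑ i, f2 i ⊗ₜ[k] f1 i
  w : R
  winv : R
  hw_mem : w ∈ M1 ∧ ∀ y ∈ M, w * y = y * w
  hwinv_mem : winv ∈ M1 ∧ ∀ y ∈ M, winv * y = y * winv
  hw_inv : w * winv = 1 ∧ winv * w = 1
  hw_central : ∀ v ∈ M1, (∀ y ∈ M, v * y = y * v) → w * v = v * w
  hw_def : w * (∑ i, T (f2 i) • f1 i) = 1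
  hw_dual : ∀ v ∈ M1, (∀ y ∈ M, v * y = y * v) → ∑ i, T (v * (w * f2 i)) • f1 i = v
/-- Extension of the depth two setting by the comultiplication `Δ`, the counit
(given by `ε(b) = ⟨1, b⟩`) and the antipode `S` on `B = C_{M₂}(M)`, characterized
through the non-degenerate pairing `⟨a, b⟩ = λ⁻² T(a e₂ e₁ w b)` of `A` and `B`. -/
structure D2H (k : Type*) [Field k] (R : Type*) [Ring R] [Algebra k R] extends D2S k R where
  Δ : R →ₗ[k] R ⊗[k] R
  S : R →ₗ[k] R
  hΔ_mem : ∀ b, (∀ y ∈ M, b * y = y * b) →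
      Δ b ∈ Submodule.span k {z : R ⊗[k] R |
        ∃ b1, (∀ y ∈ M, b1 * y = y * b1) ∧ ∃ b2, (∀ y ∈ M, b2 * y = y * b2) ∧
          z = b1 ⊗ₜ[k] b2}
  hΔ_def : ∀ a1 ∈ M1, (∀ y ∈ N, a1 * y = y * a1) →
    ∀ a2 ∈ M1, (∀ y ∈ N, a2 * y = y * a2) →
    ∀ b, (∀ y ∈ M, b * y = y * b) →
    ∀ (m : ℕ) (b1 b2 : Fin m → R), Δ b = ∑ i, b1 i ⊗ₜ[k] b2 i →
      ∑ i, (lam⁻¹ ^ 2 * T (a1 * e2 * e1 * w * b1 i)) *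
          (lam⁻¹ ^ 2 * T (a2 * e2 * e1 * w * b2 i))
        = lam⁻¹ ^ 2 * T (a1 * a2 * e2 * e1 * w * b)
  hS_mem : ∀ b, (∀ y ∈ M, b * y = y * b) → ∀ y ∈ M, S b * y = y * S b
  hS_bijOn : Set.BijOn S {b : R | ∀ y ∈ M, b * y = y * b} {b : R | ∀ y ∈ M, b * y = y * b}
  hS_def : ∀ a ∈ M1, (∀ y ∈ N, a * y = y * a) →
    ∀ b, (∀ y ∈ M, b * y = y * b) →
      lam⁻¹ ^ 2 * T (a * e2 * e1 * w * b) = lam⁻¹ ^ 2 * T (S b * e1 * e2 * w * a)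

namespace D2H

variable {k : Type*} [Field k] {R : Type*} [Ring R] [Algebra k R]

/-- The duality pairing `⟨a, b⟩ = λ⁻² T(a e₂ e₁ w b)`. -/
def pr (D : D2H k R) (a b : R) : k := D.lam⁻¹ ^ 2 * D.T (a * D.e2 * D.e1 * D.w * b)

/-- The counit `ε(b) = ⟨1, b⟩`. -/
def eps (D : D2H k R) (b : R) : k := D.pr 1 b

end D2H

open D2 D2H

/-- The action `b ⊳ x = λ⁻¹ E_{M₁}(b x e₂)` of `B` on `M₁`. -/
noncomputable def act {k : Type*} [Field k] {R : Type*} [Ring R] [Algebra k R]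
    (D : D2H k R) (b x : R) : R :=
  D.lam⁻¹ • D.EM1 (b * x * D.e2)

namespace Stmt15

variable {k : Type*} [Field k] {R : Type*} [Ring R] [Algebra k R] (D : D2H k R)

/-! ### Relative commutants and the conditional expectations -/

theorem mem_U {a : R} : a ∈ D.U ↔ a ∈ D.M ∧ ∀ y ∈ D.N, a * y = y * a := by
  simp [D2.U, Subalgebra.mem_centralizer_iff, eq_comm]

theorem mem_V {a : R} : a ∈ D.V ↔ a ∈ D.M1 ∧ ∀ y ∈ D.M, a * y = y * a := by
  simp [D2.V, Subalgebra.mem_centralizer_iff, eq_comm]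

theorem mem_A {a : R} : a ∈ D.A ↔ a ∈ D.M1 ∧ ∀ y ∈ D.N, a * y = y * a := by
  simp [D2.A, Subalgebra.mem_centralizer_iff, eq_comm]

theorem mem_B {b : R} : b ∈ D.B ↔ ∀ y ∈ D.M, b * y = y * b := by
  simp [D2.B, Subalgebra.mem_centralizer_iff, eq_comm]

theorem mem_C {c : R} : c ∈ D.C ↔ ∀ y ∈ D.N, c * y = y * c := by
  simp [D2.C, Subalgebra.mem_centralizer_iff, eq_comm]

variable {D}

theorem V_M1 {v : R} (h : v ∈ D.V) : v ∈ D.M1 := ((mem_V D).1 h).1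
theorem V_B {v : R} (h : v ∈ D.V) : v ∈ D.B := (mem_B D).2 ((mem_V D).1 h).2
theorem A_M1 {a : R} (h : a ∈ D.A) : a ∈ D.M1 := ((mem_A D).1 h).1
theorem A_C {a : R} (h : a ∈ D.A) : a ∈ D.C := (mem_C D).2 ((mem_A D).1 h).2
theorem B_C {b : R} (h : b ∈ D.B) : b ∈ D.C :=
  (mem_C D).2 fun y hy => (mem_B D).1 h y (D.hNM hy)
theorem V_A {v : R} (h : v ∈ D.V) : v ∈ D.A :=
  (mem_A D).2 ⟨V_M1 h, (mem_C D).1 (B_C (V_B h))⟩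
theorem U_A {u : R} (h : u ∈ D.U) : u ∈ D.A :=
  (mem_A D).2 ⟨D.hMM1 ((mem_U D).1 h).1, ((mem_U D).1 h).2⟩

variable (D)

theorem e1_A : D.e1 ∈ D.A := (mem_A D).2 ⟨D.he1_mem, D.he1_N⟩
theorem e2_B : D.e2 ∈ D.B := (mem_B D).2 D.he2_M
theorem w_V : D.w ∈ D.V := (mem_V D).2 D.hw_mem
theorem winv_V : D.winv ∈ D.V := (mem_V D).2 D.hwinv_mem
theorem f1_V (l) : D.f1 l ∈ D.V := (mem_V D).2 (D.hf1 l)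
theorem f2_V (l) : D.f2 l ∈ D.V := (mem_V D).2 (D.hf2 l)
theorem zb_A (j) : D.zb j ∈ D.A := (mem_A D).2 (D.hzb j)
theorem wb_A (j) : D.wb j ∈ D.A := (mem_A D).2 (D.hwb j)

variable {D}

theorem EM1_A {c : R} (h : c ∈ D.C) : D.EM1 c ∈ D.A := by
  refine (mem_A D).2 ⟨D.hEM1_mem c, fun y hy => ?_⟩
  have hy1 := D.hMM1 (D.hNM hy)
  rw [← D.hEM1_right y hy1, ← D.hEM1_left y hy1, (mem_C D).1 h y hy]

theorem EM1_V {b : R} (h : b ∈ D.B) : D.EM1 b ∈ D.V := by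
  refine (mem_V D).2 ⟨D.hEM1_mem b, fun y hy => ?_⟩
  have hy1 := D.hMM1 hy
  rw [← D.hEM1_right y hy1, ← D.hEM1_left y hy1, (mem_B D).1 h y hy]

theorem EM_U {a : R} (h : a ∈ D.A) : D.EM a ∈ D.U := by
  refine (mem_U D).2 ⟨D.hEM_mem a (A_M1 h), fun y hy => ?_⟩
  have hy1 := D.hNM hy
  rw [← D.hEM_right y hy1 a (A_M1 h), ← D.hEM_left y hy1 a (A_M1 h), ((mem_A D).1 h).2 y hy]

variable (D)

/-- The Markov property of `T` with respect to `e₂`. -/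
theorem T_e2 {x y : R} (hx : x ∈ D.M1) (hy : y ∈ D.M1) :
    D.T (x * D.e2 * y) = D.lam * D.T (x * y) := by
  rw [← D.hTEM1, D.hEM1_e2 x hx y hy, map_smul, smul_eq_mul]

theorem EM1_mul_e2 {x : R} (hx : x ∈ D.M1) : D.EM1 (x * D.e2) = D.lam • x := by
  simpa using D.hEM1_e2 x hx 1 (one_mem _)

theorem act_e2 (c x : R) : c * x * D.e2 = act D c x * D.e2 := by
  rw [act, smul_mul_assoc]; exact D.hPP2 _

theorem act_mem (c x : R) : act D c x ∈ D.M1 := D.M1.smul_mem (D.hEM1_mem _) _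

variable {D}

theorem act_A {c a : R} (hc : c ∈ D.C) (ha : a ∈ D.A) : act D c a ∈ D.A :=
  D.A.smul_mem (EM1_A (mul_mem (mul_mem hc (A_C ha)) (B_C (e2_B D)))) _

/-- If `c x e₂ = y e₂` with `y ∈ M₁`, then `c ⊳ x = y`. -/
theorem act_eq {c x y : R} (hy : y ∈ D.M1) (h : c * x * D.e2 = y * D.e2) : act D c x = y := by
  rw [act, h, EM1_mul_e2 D hy, smul_smul, inv_mul_cancel₀ D.lam_ne, one_smul]

theorem act_mul (c c' x : R) : act D (c * c') x = act D c (act D c' x) := by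
  refine act_eq (act_mem D _ _) ?_
  rw [← act_e2, mul_assoc c _ D.e2, ← act_e2]; simp only [mul_assoc]

theorem act_of_M1 {y x : R} (hy : y ∈ D.M1) (hx : x ∈ D.M1) : act D y x = y * x :=
  act_eq (mul_mem hy hx) rfl

theorem act_M_mul {b m : R} (hb : b ∈ D.B) (hm : m ∈ D.M) (x : R) :
    act D b (m * x) = m * act D b x := by
  refine act_eq (mul_mem (D.hMM1 hm) (act_mem D _ _)) ?_
  rw [mul_assoc m, ← act_e2, ← mul_assoc b, (mem_B D).1 hb m hm]; simp only [mul_assoc]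

theorem act_mul_M (c x : R) {m : R} (hm : m ∈ D.M) :
    act D c (x * m) = act D c x * m := by
  refine act_eq (mul_mem (act_mem D _ _) (D.hMM1 hm)) ?_
  rw [mul_assoc (act D c x), ← D.he2_M m hm, ← mul_assoc (act D c x), ← act_e2, mul_assoc (c * x),
    D.he2_M m hm]; simp only [mul_assoc]

theorem act_one_V {b : R} (hb : b ∈ D.B) : act D b 1 ∈ D.V :=
  D.V.smul_mem (EM1_V (mul_mem (mul_mem hb (one_mem _)) (e2_B D))) _

/-- Elements of `M₂ = M₁ e₂ M₁` are determined by left multiplication on `M₁ e₂`. -/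
theorem eq_zero_of_mul_e2 {r : R} (h : ∀ x ∈ D.M1, r * x * D.e2 = 0) : r = 0 := by
  have key : ∀ z : R, r * z = 0 := by
    intro z
    have hz : z ∈ (⊤ : Submodule k R) := trivial
    rw [D.hM2_gen] at hz
    induction hz using Submodule.span_induction with
    | mem z hz =>
      obtain ⟨x, hx, y, hy, rfl⟩ := hz
      rw [← mul_assoc, ← mul_assoc, h x hx, zero_mul]
    | zero => simp
    | add a b _ _ ha hb => rw [mul_add, ha, hb, add_zero]
    | smul c a _ ha => rw [mul_smul_comm, ha, smul_zero]
  simpa using key 1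

/-- Linear maps on `M₁` commuting with `M` on both sides are implemented by `B`
through left multiplication on `M₁ e₂`. -/
theorem exists_B (φ : R →ₗ[k] R) (hl : ∀ m ∈ D.M, ∀ x ∈ D.M1, φ (m * x) = m * φ x)
    (hr : ∀ m ∈ D.M, ∀ x ∈ D.M1, φ (x * m) = φ x * m) :
    ∃ β ∈ D.B, ∀ x ∈ D.M1, β * x * D.e2 = φ x * D.e2 := by
  have key : ∀ x ∈ D.M1, (∑ j, φ (D.zb j) * D.e2 * D.wb j) * x * D.e2 = φ x * D.e2 := by
    intro x hx
    conv_rhs => rw [← D.hdualA2 x hx, map_sum, Finset.sum_mul]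
    simp only [Finset.sum_mul]
    refine Finset.sum_congr rfl fun j _ => ?_
    have h1 := mul_mem (D.hwb j).1 hx
    rw [hr _ (D.hEM_mem _ h1) _ (D.hzb j).1, mul_assoc (φ (D.zb j)) _ D.e2, ← D.he2_jones' _ h1,
      ← D.he2_jones _ h1]
    simp only [mul_assoc]
  refine ⟨_, (mem_B D).2 fun m hm => ?_, key⟩
  rw [← sub_eq_zero]
  refine eq_zero_of_mul_e2 (D := D) fun x hx => ?_
  have h1 := key (m * x) (mul_mem (D.hMM1 hm) hx)
  have h2 := key x hx
  rw [sub_mul, sub_mul, sub_eq_zero, mul_assoc m, mul_assoc m, h2, mul_assoc _ m, h1, hl m hm x hx,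
    mul_assoc]

variable (D)

theorem sum_z_e2_w : ∑ j, D.zb j * D.e2 * D.wb j = 1 := by
  rw [← sub_eq_zero]
  refine eq_zero_of_mul_e2 (D := D) fun x hx => ?_
  rw [sub_mul, sub_mul, sub_eq_zero, one_mul]
  conv_rhs => rw [← D.hdualA2 x hx, Finset.sum_mul]
  simp only [Finset.sum_mul]
  refine Finset.sum_congr rfl fun j _ => ?_
  have h1 := mul_mem (D.hwb j).1 hx
  rw [mul_assoc (D.zb j) _ D.e2, ← D.he2_jones' _ h1, ← D.he2_jones _ h1]
  simp only [mul_assoc]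

theorem sum_x_e1_y : ∑ i, D.xb i * D.e1 * D.yb i = 1 := by
  have key : ∀ z ∈ D.M1.toSubmodule, (∑ i, D.xb i * D.e1 * D.yb i) * z = z := by
    rw [D.hM1_gen]
    intro z hz
    induction hz using Submodule.span_induction with
    | mem z hz =>
      obtain ⟨m, hm, m', -, rfl⟩ := hz
      conv_rhs => rw [← D.hdual2 m hm, Finset.sum_mul, Finset.sum_mul]
      rw [Finset.sum_mul]
      refine Finset.sum_congr rfl fun j _ => ?_
      have h1 := mul_mem (D.hyb j) hm
      rw [mul_assoc (D.xb j) _ D.e1, ← D.he1_jones' _ h1, ← D.he1_jones _ h1]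
      simp only [mul_assoc]
    | zero => simp
    | add a b _ _ ha hb => rw [mul_add, ha, hb]
    | smul c a _ ha => rw [mul_smul_comm, ha]
  simpa using key 1 (one_mem D.M1)

/-- The conditional expectation `c ↦ λ ∑ xᵢ c yᵢ` of `C = C_{M₂}(N)` onto `B = C_{M₂}(M)`. -/
def EB (c : R) : R := D.lam • ∑ i, D.xb i * c * D.yb i

variable {D}

theorem EB_mem {c : R} (hc : c ∈ D.C) : EB D c ∈ D.B := by
  refine D.B.smul_mem ((mem_B D).2 fun m hm => ?_) _
  have h1 : ∀ i, m * D.xb i = ∑ j, D.xb j * D.E (D.yb j * (m * D.xb i)) :=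
    fun i => (D.hdual2 _ (mul_mem hm (D.hxb i))).symm
  have h2 : ∀ j, D.yb j * m = ∑ i, D.E (D.yb j * m * D.xb i) * D.yb i :=
    fun j => (D.hdual1 _ (mul_mem (D.hyb j) hm)).symm
  calc (∑ j, D.xb j * c * D.yb j) * m
      = ∑ j, ∑ i, D.xb j * c * (D.E (D.yb j * m * D.xb i) * D.yb i) := by
        rw [Finset.sum_mul]
        refine Finset.sum_congr rfl fun j _ => ?_
        conv_lhs => rw [mul_assoc, h2, Finset.mul_sum]
    _ = ∑ i, ∑ j, D.xb j * D.E (D.yb j * (m * D.xb i)) * c * D.yb i := by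
        rw [Finset.sum_comm]
        refine Finset.sum_congr rfl fun i _ => Finset.sum_congr rfl fun j _ => ?_
        have := (mem_C D).1 hc _
          (D.hE_mem _ (mul_mem (mul_mem (D.hyb j) hm) (D.hxb i)))
        rw [← mul_assoc, mul_assoc _ c, this]
        simp only [mul_assoc]
    _ = m * ∑ i, D.xb i * c * D.yb i := by
        rw [Finset.mul_sum]
        refine Finset.sum_congr rfl fun i _ => ?_
        conv_rhs => rw [← mul_assoc, ← mul_assoc, h1, Finset.sum_mul, Finset.sum_mul]

theorem T_EB (c : R) {b : R} (hb : b ∈ D.B) : D.T (EB D c * b) = D.T (c * b) := by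
  have h : ∀ i, D.T (D.xb i * c * D.yb i * b) = D.T (c * b * (D.yb i * D.xb i)) := by
    intro i
    rw [mul_assoc, ← (mem_B D).1 hb _ (D.hyb i), mul_assoc, D.hT_tr]
    simp only [mul_assoc]
  rw [EB, smul_mul_assoc, map_smul, Finset.sum_mul, map_sum]
  simp only [h]
  rw [← map_sum, ← Finset.mul_sum, D.hindex', mul_smul_comm, mul_one, map_smul, smul_smul,
    mul_inv_cancel₀ D.lam_ne, one_smul]

variable (D) in
theorem EB_e1 : EB D D.e1 = D.lam • 1 := by rw [EB, sum_x_e1_y]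

theorem T_e1_mul {b : R} (hb : b ∈ D.B) : D.T (D.e1 * b) = D.lam * D.T b := by
  rw [← T_EB _ hb, EB_e1, smul_mul_assoc, one_mul, map_smul, smul_eq_mul]

theorem EB_mul_e1 {c : R} (hc : c ∈ D.C) : EB D (c * D.e1) * D.e1 = D.lam • (c * D.e1) := by
  rw [EB, smul_mul_assoc, Finset.sum_mul]
  congr 1
  have h := D.hdual2 1 (one_mem _)
  simp only [mul_one] at h
  conv_rhs => rw [← one_mul c, ← h, Finset.sum_mul, Finset.sum_mul]
  refine Finset.sum_congr rfl fun i _ => ?_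
  have h1 := (mem_C D).1 hc _ (D.hE_mem _ (D.hyb i))
  have h2 := D.he1_jones _ (D.hyb i)
  rw [D.he1_jones' _ (D.hyb i)] at h2
  rw [mul_assoc _ _ c, ← h1]
  simp only [mul_assoc] at h2 ⊢
  rw [h2]

theorem e1_mul_EB {c : R} (hc : c ∈ D.C) : D.e1 * EB D (D.e1 * c) = D.lam • (D.e1 * c) := by
  rw [EB, mul_smul_comm, Finset.mul_sum]
  congr 1
  have h := D.hdual1 1 (one_mem _)
  simp only [one_mul] at h
  conv_rhs => rw [← mul_one c, ← h, Finset.mul_sum, Finset.mul_sum]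
  refine Finset.sum_congr rfl fun i _ => ?_
  have h1 := (mem_C D).1 hc _ (D.hE_mem _ (D.hxb i))
  have h2 := D.he1_jones _ (D.hxb i)
  rw [← mul_assoc c, h1]
  simp only [← mul_assoc] at h2 ⊢
  rw [h2]

theorem eq_zero_of_e1_mul {b : R} (hb : b ∈ D.B) (h : D.e1 * b = 0) : b = 0 := by
  rw [← one_mul b, ← sum_x_e1_y D, Finset.sum_mul]
  refine Finset.sum_eq_zero fun i _ => ?_
  rw [mul_assoc, ← (mem_B D).1 hb _ (D.hyb i), ← mul_assoc, mul_assoc _ D.e1, h]; simp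

/-! ### Non-degeneracy -/

theorem nondegA {a : R} (ha : a ∈ D.A) (h : ∀ a' ∈ D.A, D.T (a' * a) = 0) : a = 0 := by
  have h1 : ∀ a' ∈ D.A, D.EM (a' * a) = 0 := by
    intro a' ha'
    have hu := EM_U (mul_mem ha' ha)
    rw [mem_U] at hu
    refine D.hU_nondeg _ hu.1 hu.2 fun u' hu' hu'' => ?_
    have h3 := A_M1 (mul_mem ha' ha)
    rw [← D.hEM_right u' hu' _ h3, D.hTEM _ (mul_mem h3 (D.hMM1 hu')), D.hT_tr, ← mul_assoc]
    exact h _ (mul_mem (U_A ((mem_U D).2 ⟨hu', hu''⟩)) ha')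
  rw [← D.hdualA2 a (A_M1 ha)]
  exact Finset.sum_eq_zero fun j _ => by rw [h1 _ (wb_A D j), mul_zero]

theorem nondegB {b : R} (hb : b ∈ D.B) (h : ∀ b' ∈ D.B, D.T (b * b') = 0) : b = 0 := by
  have h1 : ∀ b' ∈ D.B, D.EM1 (b * b') = 0 := by
    intro b' hb'
    have hv := EM1_V (mul_mem hb hb')
    rw [mem_V] at hv
    rw [← D.hw_dual _ hv.1 hv.2]
    refine Finset.sum_eq_zero fun l _ => ?_
    have h2 := mul_mem (w_V D) (f2_V D l)
    rw [← D.hEM1_right _ (V_M1 h2), D.hTEM1, mul_assoc, h _ (mul_mem hb' (V_B h2)), zero_smul]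
  rw [← D.hdualB1 b]
  exact Finset.sum_eq_zero fun i _ => by rw [h1 _ ((mem_B D).2 (D.hub i)), zero_mul]

theorem nondegC {c : R} (hc : c ∈ D.C) (h : ∀ a ∈ D.A, ∀ b ∈ D.B, D.T (c * (a * b)) = 0) :
    c = 0 := by
  rw [← D.hdualB2 c]
  refine Finset.sum_eq_zero fun i _ => ?_
  have hv : D.vb i ∈ D.B := (mem_B D).2 (D.hvb i)
  rw [nondegA (EM1_A (mul_mem (B_C hv) hc)), mul_zero]
  intro a ha
  rw [← D.hEM1_left a (A_M1 ha), D.hTEM1, D.hT_tr, mul_assoc, D.hT_tr, mul_assoc]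
  exact h a ha _ hv

theorem pr_eq (a b : R) : D.pr a b = D.lam⁻¹ ^ 2 * D.T (a * D.e2 * D.e1 * D.w * b) := rfl

theorem pr_eq_act {a : R} (b : R) :
    D.pr a b = D.lam⁻¹ * D.T (act D b a * D.e1 * D.w) := by
  have h1 : D.T (a * D.e2 * D.e1 * D.w * b) = D.T (act D b a * D.e2 * (D.e1 * D.w)) := by
    rw [← act_e2, D.hT_tr]; simp only [mul_assoc]
  rw [pr_eq, h1, T_e2 D (act_mem D _ _) (mul_mem D.he1_mem D.hw_mem.1), mul_assoc (act D b a)]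
  have := D.lam_ne
  field_simp

theorem pr_nondegA {a : R} (ha : a ∈ D.A) (h : ∀ b ∈ D.B, D.pr a b = 0) : a = 0 := by
  have hl := D.lam_ne
  have hc : a * D.e2 * D.e1 * D.w ∈ D.C :=
    mul_mem (mul_mem (mul_mem (A_C ha) (B_C (e2_B D))) (A_C (e1_A D))) (B_C (V_B (w_V D)))
  have h1 : EB D (a * D.e2 * D.e1 * D.w) = 0 := by
    refine nondegB (EB_mem hc) fun b hb => ?_
    have := h b hb
    rw [pr_eq] at this
    rw [T_EB _ hb]
    simpa [hl] using this
  -- `w` commutes with the `yᵢ`, so it can be cancelled before multiplying by `e₁`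
  have h2 : EB D (a * D.e2 * D.e1) = 0 := by
    have h3 : EB D (a * D.e2 * D.e1 * D.w) * D.winv = EB D (a * D.e2 * D.e1) := by
      rw [EB, EB, smul_mul_assoc, Finset.sum_mul]
      congr 1
      refine Finset.sum_congr rfl fun i _ => ?_
      rw [mul_assoc _ _ D.winv, ← D.hwinv_mem.2 _ (D.hyb i)]
      simp only [mul_assoc]
      rw [← mul_assoc D.w, D.hw_inv.1, one_mul]
    rw [← h3, h1, zero_mul]
  have h4 := EB_mul_e1 (mul_mem (A_C ha) (B_C (e2_B D)))
  rw [h2, zero_mul] at h4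
  have h5 : a * D.e2 * D.e1 = 0 := by simpa [hl] using h4.symm
  have h6 : a * D.e2 = 0 := by
    have : a * D.e2 * D.e1 * D.e2 = D.lam • (a * D.e2) := by
      rw [mul_assoc a, mul_assoc a, D.hbraid2, mul_smul_comm]
    rw [h5, zero_mul] at this
    simpa [hl] using this.symm
  have h7 := EM1_mul_e2 D (A_M1 ha)
  rw [h6, map_zero] at h7
  simpa [hl] using h7.symm

theorem pr_nondegB {b : R} (hb : b ∈ D.B) (h : ∀ a ∈ D.A, D.pr a b = 0) : b = 0 := by
  have hl := D.lam_ne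
  have hwb := mul_mem (V_B (w_V D)) hb
  have h1 : D.EM1 (D.e2 * (D.e1 * (D.w * b))) = 0 := by
    refine nondegA (EM1_A (mul_mem (B_C (e2_B D)) (mul_mem (A_C (e1_A D)) (B_C hwb))))
      fun a ha => ?_
    have := h a ha
    rw [pr_eq] at this
    rw [← D.hEM1_left a (A_M1 ha), D.hTEM1]
    simpa [hl, mul_assoc] using this
  have h2 := D.hPP2' (D.e1 * (D.w * b))
  rw [h1, mul_zero, smul_zero] at h2
  have h3 : D.e1 * (D.w * b) = 0 := by
    have : D.e1 * D.e2 * D.e1 * (D.w * b) = 0 := by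
      rw [mul_assoc, mul_assoc, h2, mul_zero]
    rw [D.hbraid1, smul_mul_assoc] at this
    simpa [hl] using this
  have h4 := eq_zero_of_e1_mul hwb h3
  rw [← one_mul b, ← D.hw_inv.2, mul_assoc, h4, mul_zero]

/-! ### The comultiplication -/

/-- The functional `T(· e₁ w)` on a product in `A` splits along the separability element of `V`;
this is what makes `Delta_of_mul` compatible with the pairing. -/
theorem f_trace {c c' : R} (hc' : c' ∈ D.A) :
    ∑ l, D.T (c * D.f1 l * D.e1 * D.w) * D.T (D.f2 l * c' * D.e1 * D.w)
      = D.lam * D.T (c * c' * D.e1 * D.w) := by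
  have hce := mul_mem hc' (e1_A D)
  have hv : EB D (c' * D.e1) ∈ D.V := by
    refine (mem_V D).2 ⟨D.M1.smul_mem (sum_mem fun i _ => ?_) _, (mem_B D).1 (EB_mem (A_C hce))⟩
    exact mul_mem (mul_mem (D.hMM1 (D.hxb i)) (A_M1 hce)) (D.hMM1 (D.hyb i))
  have h1 : ∀ l, D.T (D.f2 l * c' * D.e1 * D.w)
      = D.T (EB D (c' * D.e1) * (D.w * D.f2 l)) := by
    intro l
    rw [T_EB _ (mul_mem (V_B (w_V D)) (V_B (f2_V D l))), mul_assoc, mul_assoc, D.hT_tr]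
    simp only [mul_assoc]
  have h2 := D.hw_dual _ (V_M1 hv) ((mem_V D).1 hv).2
  calc _ = D.T (c * (∑ l, D.T (EB D (c' * D.e1) * (D.w * D.f2 l)) • D.f1 l) * D.e1 * D.w) := by
        simp only [h1, Finset.mul_sum, Finset.sum_mul, map_sum, mul_smul_comm, smul_mul_assoc,
          map_smul, smul_eq_mul]
        exact Finset.sum_congr rfl fun l _ => mul_comm _ _
    _ = _ := by
        rw [h2, mul_assoc c, EB_mul_e1 (A_C hc')]
        simp [mul_assoc]

/-- A tensor in `B ⊗ B` killed by all `f ⊗ g`, with `f` and `g` from a family of functionals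
separating the points of `B`, is zero. -/
theorem tensor_eq_zero {B : Submodule k R} {F : Set (R →ₗ[k] k)}
    (hF : ∀ b ∈ B, (∀ f ∈ F, f b = 0) → b = 0) {t : R ⊗[k] R}
    (ht : t ∈ Submodule.span k {z : R ⊗[k] R | ∃ b1 ∈ B, ∃ b2 ∈ B, z = b1 ⊗ₜ[k] b2})
    (h : ∀ f ∈ F, ∀ g ∈ F, LinearMap.mul' k k (TensorProduct.map f g t) = 0) : t = 0 := by
  obtain ⟨s, rfl⟩ : ∃ s : B ⊗[k] B, TensorProduct.map B.subtype B.subtype s = t := by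
    refine Submodule.span_le (p := LinearMap.range (TensorProduct.map B.subtype B.subtype)).2 ?_ ht
    rintro _ ⟨b1, h1, b2, h2, rfl⟩
    exact ⟨⟨b1, h1⟩ ⊗ₜ ⟨b2, h2⟩, by simp⟩
  let 𝒞 := Module.Basis.ofVectorSpace k B
  obtain ⟨c, rfl⟩ := TensorProduct.eq_repr_basis_right 𝒞 s
  have hc : ∀ i, c i = 0 := by
    intro i
    by_contra hi
    refine hi (Subtype.ext (hF _ (c i).2 fun f hf => ?_))
    have h1 : c.sum (fun i m => f (m : R) • 𝒞 i) = 0 := by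
      refine Subtype.ext (hF _ (Subtype.mem _) fun g hg => ?_)
      have := h f hf g hg
      simpa [Finsupp.sum, map_sum] using this
    have h2 := linearIndependent_iff'.1 𝒞.linearIndependent c.support _ h1 i
    exact h2 (Finsupp.mem_support_iff.2 hi)
  have : c = 0 := Finsupp.ext hc
  simp [this]

/-- An expression `∑ f b₍₁₎ b₍₂₎`, with `f` bilinear, only depends on the tensor. -/
theorem sum_transfer {P ι κ : Type*} [AddCommGroup P] [Module k P] [Fintype ι] [Fintype κ]
    {b1 b2 : ι → R} {c1 c2 : κ → R} (h : ∑ i, b1 i ⊗ₜ[k] b2 i = ∑ i, c1 i ⊗ₜ[k] c2 i)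
    (f : R → R → P) (h1 : ∀ x y z, f (x + y) z = f x z + f y z)
    (h2 : ∀ (c : k) x z, f (c • x) z = c • f x z)
    (h3 : ∀ x y z, f x (y + z) = f x y + f x z)
    (h4 : ∀ (c : k) x z, f x (c • z) = c • f x z) :
    ∑ i, f (b1 i) (b2 i) = ∑ i, f (c1 i) (c2 i) := by
  have := congrArg (TensorProduct.lift (LinearMap.mk₂ k f h1 h2 h3 h4)) h
  simpa using this

variable (D) in
/-- The functional `⟨a, ·⟩`. -/
noncomputable def prL (a : R) : R →ₗ[k] k :=
  D.lam⁻¹ ^ 2 • D.T ∘ₗ LinearMap.mulLeft k (a * D.e2 * D.e1 * D.w)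

theorem prL_apply (a b : R) : prL D a b = D.pr a b := rfl

/-- Comultiplications of elements of `B` have representatives in `B`. -/
theorem exists_rep {b : R} (hb : b ∈ D.B) : ∃ (n : ℕ) (b1 b2 : Fin n → R),
    (∀ i, b1 i ∈ D.B) ∧ (∀ i, b2 i ∈ D.B) ∧ D.Δ b = ∑ i, b1 i ⊗ₜ[k] b2 i := by
  obtain ⟨n, c, g, h⟩ := Submodule.mem_span_set'.1 (D.hΔ_mem b ((mem_B D).1 hb))
  choose b1 h1 b2 h2 h3 using fun i => (g i).2
  refine ⟨n, fun i => c i • b1 i, b2, fun i => D.B.smul_mem ((mem_B D).2 (h1 i)) _,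
    fun i => (mem_B D).2 (h2 i), ?_⟩
  rw [← h]
  exact Finset.sum_congr rfl fun i _ => by rw [h3, TensorProduct.smul_tmul']

/-- The comultiplication on `B` is determined by the pairing with `A ⊗ A`. -/
theorem Delta_eq {b : R} (hb : b ∈ D.B) {ι : Type*} [Fintype ι] {c1 c2 : ι → R}
    (h1 : ∀ i, c1 i ∈ D.B) (h2 : ∀ i, c2 i ∈ D.B)
    (h : ∀ a1 ∈ D.A, ∀ a2 ∈ D.A, ∑ i, D.pr a1 (c1 i) * D.pr a2 (c2 i) = D.pr (a1 * a2) b) :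
    D.Δ b = ∑ i, c1 i ⊗ₜ[k] c2 i := by
  rw [← sub_eq_zero]
  refine tensor_eq_zero (B := D.B.toSubmodule) (F := prL D '' D.A) ?_ ?_ ?_
  · intro b hb h
    exact pr_nondegB hb fun a ha => h _ ⟨a, ha, rfl⟩
  · refine sub_mem ?_ (sum_mem fun i _ => Submodule.subset_span ⟨_, h1 i, _, h2 i, rfl⟩)
    refine Submodule.span_mono ?_ (D.hΔ_mem b ((mem_B D).1 hb))
    rintro _ ⟨b1, h1, b2, h2, rfl⟩
    exact ⟨b1, (mem_B D).2 h1, b2, (mem_B D).2 h2, rfl⟩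
  · rintro _ ⟨a1, ha1, rfl⟩ _ ⟨a2, ha2, rfl⟩
    obtain ⟨n, b1, b2, -, -, hΔ⟩ := exists_rep hb
    have := D.hΔ_def a1 (A_M1 ha1) ((mem_A D).1 ha1).2 a2 (A_M1 ha2) ((mem_A D).1 ha2).2 b
      ((mem_B D).1 hb) n b1 b2 hΔ
    rw [hΔ, map_sub, map_sub, sub_eq_zero]
    simp only [map_sum, TensorProduct.map_tmul, LinearMap.mul'_apply, prL_apply]
    exact this.trans (h a1 ha1 a2 ha2).symm

theorem pr_mul {b : R} (hb : b ∈ D.B) {m : ℕ} {b1 b2 : Fin m → R}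
    (hΔ : D.Δ b = ∑ i, b1 i ⊗ₜ[k] b2 i) {a1 a2 : R} (ha1 : a1 ∈ D.A) (ha2 : a2 ∈ D.A) :
    D.pr (a1 * a2) b = ∑ i, D.pr a1 (b1 i) * D.pr a2 (b2 i) :=
  (D.hΔ_def a1 (A_M1 ha1) ((mem_A D).1 ha1).2 a2 (A_M1 ha2) ((mem_A D).1 ha2).2 b
    ((mem_B D).1 hb) m b1 b2 hΔ).symm

theorem exists_act (φ : R →ₗ[k] R) (h : ∀ x ∈ D.M1, φ x ∈ D.M1)
    (hl : ∀ m ∈ D.M, ∀ x ∈ D.M1, φ (m * x) = m * φ x)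
    (hr : ∀ m ∈ D.M, ∀ x ∈ D.M1, φ (x * m) = φ x * m) :
    ∃ β ∈ D.B, ∀ x ∈ D.M1, act D β x = φ x := by
  obtain ⟨β, hβ, h'⟩ := exists_B φ hl hr
  exact ⟨β, hβ, fun x hx => act_eq (h x hx) (h' x hx)⟩

theorem exists_rho {v : R} (hv : v ∈ D.V) : ∃ r ∈ D.B, ∀ x ∈ D.M1, act D r x = x * v := by
  refine exists_act (LinearMap.mulRight k v) (fun x hx => mul_mem hx (V_M1 hv)) ?_ ?_
  · intro m hm x hx; simp [mul_assoc]
  · intro m hm x hx; simp [mul_assoc, ((mem_V D).1 hv).2 m hm]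

variable (D) in
/-- The element of `B` acting on `M₁` as right multiplication by `f⁽¹⁾`. -/
noncomputable def rho (l : Fin D.nV) : R := (exists_rho (f1_V D l)).choose

theorem rho_B (l : Fin D.nV) : rho D l ∈ D.B := (exists_rho (f1_V D l)).choose_spec.1

theorem act_rho (l : Fin D.nV) {x : R} (hx : x ∈ D.M1) : act D (rho D l) x = x * D.f1 l :=
  (exists_rho (f1_V D l)).choose_spec.2 x hx

theorem act_add_left (b c x : R) : act D (b + c) x = act D b x + act D c x := by
  simp [act, add_mul]

theorem act_smul_left (r : k) (b x : R) : act D (r • b) x = r • act D b x := by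
  rw [act, act, smul_mul_assoc, smul_mul_assoc, map_smul, smul_comm]

theorem act_sum_right {ι : Type*} (s : Finset ι) (b : R) (x : ι → R) :
    act D b (∑ i ∈ s, x i) = ∑ i ∈ s, act D b (x i) := by
  simp [act, Finset.mul_sum, Finset.sum_mul, Finset.smul_sum]

/-- If `b a = ∑ (βᵢ ⊳ a) vᵢ` for all `a ∈ A`, then `Δ(b)` is `∑ βᵢ ⊗ vᵢ` multiplied by the
separability element of `V`, its first leg acting from the right on `M₁`. -/
theorem Delta_of_mul {b : R} (hb : b ∈ D.B) {n : ℕ} {β v : Fin n → R} (hβ : ∀ i, β i ∈ D.B)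
    (hv : ∀ i, v i ∈ D.B) (h : ∀ a ∈ D.A, b * a = ∑ i, act D (β i) a * v i) :
    D.Δ b = ∑ p : Fin n × Fin D.nV, (rho D p.2 * β p.1) ⊗ₜ[k] (D.f2 p.2 * v p.1) := by
  refine Delta_eq hb (fun p => mul_mem (rho_B _) (hβ _))
    (fun p => mul_mem (V_B (f2_V D _)) (hv _)) fun a1 ha1 a2 ha2 => ?_
  have hl := D.lam_ne
  have h1 : act D b (a1 * a2) = ∑ i, act D (β i) a1 * act D (v i) a2 := by
    refine act_eq (sum_mem fun i _ => mul_mem (act_mem D _ _) (act_mem D _ _)) ?_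
    rw [← mul_assoc, h a1 ha1]
    simp only [Finset.sum_mul]
    refine Finset.sum_congr rfl fun i _ => ?_
    rw [mul_assoc (act D (β i) a1) _ D.e2, ← act_e2]; simp only [mul_assoc]
  rw [Fintype.sum_prod_type, pr_eq_act, h1]
  simp only [Finset.sum_mul, map_sum, Finset.mul_sum]
  refine Finset.sum_congr rfl fun i _ => ?_
  have h2 := f_trace (c := act D (β i) a1) (act_A (B_C (hv i)) ha2)
  have h3 : ∀ l, D.pr a1 (rho D l * β i) * D.pr a2 (D.f2 l * v i)
      = D.lam⁻¹ ^ 2 * (D.T (act D (β i) a1 * D.f1 l * D.e1 * D.w) *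
        D.T (D.f2 l * act D (v i) a2 * D.e1 * D.w)) := by
    intro l
    rw [pr_eq_act, pr_eq_act, act_mul, act_mul, act_rho l (act_mem D _ _),
      act_of_M1 (V_M1 (f2_V D l)) (act_mem D _ _)]
    ring
  simp only [h3]
  rw [← Finset.mul_sum, h2]
  field_simp

/-- The commutation rule `b x = (b₍₁₎ ⊳ x) b₍₂₎`. -/
theorem mul_eq_sum_act {b : R} (hb : b ∈ D.B) {m : ℕ} {b1 b2 : Fin m → R}
    (hΔ : D.Δ b = ∑ i, b1 i ⊗ₜ[k] b2 i) {x : R} (hx : x ∈ D.M1) :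
    b * x = ∑ i, act D (b1 i) x * b2 i := by
  have key : ∀ i, ∃ β ∈ D.B, ∀ x ∈ D.M1, act D β x = D.EM1 (b * x * D.ub i) := by
    intro i
    refine exists_act (D.EM1 ∘ₗ LinearMap.mulRight k (D.ub i) ∘ₗ LinearMap.mulLeft k b)
      (fun x _ => D.hEM1_mem _) ?_ ?_
    · intro m hm x hx
      simp only [LinearMap.comp_apply, LinearMap.mulLeft_apply, LinearMap.mulRight_apply]
      rw [← D.hEM1_left m (D.hMM1 hm), ← mul_assoc b, (mem_B D).1 hb m hm]
      simp only [mul_assoc]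
    · intro m hm x hx
      simp only [LinearMap.comp_apply, LinearMap.mulLeft_apply, LinearMap.mulRight_apply]
      rw [← D.hEM1_right m (D.hMM1 hm), mul_assoc _ _ m, D.hub i m hm]
      simp only [mul_assoc]
  choose β hβ hact using key
  have hv : ∀ i, D.vb i ∈ D.B := fun i => (mem_B D).2 (D.hvb i)
  have hmul : ∀ x ∈ D.M1, b * x = ∑ i, act D (β i) x * D.vb i := by
    intro x hx
    simp only [hact _ x hx, D.hdualB1]
  have h1 := Delta_of_mul hb hβ hv fun a ha => hmul a (A_M1 ha)
  have h2 := sum_transfer (hΔ.symm.trans h1) (fun y z => act D y x * z)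
    (fun y z t => by simp [act_add_left, add_mul]) (fun c y z => by simp [act_smul_left])
    (fun y z t => by simp [mul_add]) (fun c y z => by simp)
  rw [h2, hmul x hx, Fintype.sum_prod_type]
  refine Finset.sum_congr rfl fun i _ => ?_
  have h3 : ∀ l, act D (rho D l * β i) x * (D.f2 l * D.vb i)
      = act D (β i) x * (D.f1 l * D.f2 l) * D.vb i := by
    intro l
    rw [act_mul, act_rho l (act_mem D _ _)]; simp only [mul_assoc]
  simp only [h3]
  rw [← Finset.sum_mul, ← Finset.mul_sum, D.hf_one, mul_one]

/-! ### The module algebra axioms -/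

theorem act_mul_right {b : R} (hb : b ∈ D.B) {m : ℕ} {b1 b2 : Fin m → R}
    (hΔ : D.Δ b = ∑ i, b1 i ⊗ₜ[k] b2 i) {x y : R} (hx : x ∈ D.M1) :
    act D b (x * y) = ∑ i, act D (b1 i) x * act D (b2 i) y := by
  refine act_eq (sum_mem fun i _ => mul_mem (act_mem D _ _) (act_mem D _ _)) ?_
  rw [← mul_assoc, mul_eq_sum_act hb hΔ hx]
  simp only [Finset.sum_mul]
  refine Finset.sum_congr rfl fun i _ => ?_
  rw [mul_assoc (act D (b1 i) x) _ D.e2, ← act_e2]; simp only [mul_assoc]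

/-- The target counital map of `B`, in the form in which it enters the unit axiom and the
definition of invariants: `∑ ε(1₍₁₎ b) 1₍₂₎ = b ⊳ 1`. -/
theorem sum_eps {b : R} (hb : b ∈ D.B) {m : ℕ} {o1 o2 : Fin m → R}
    (hΔ : D.Δ 1 = ∑ j, o1 j ⊗ₜ[k] o2 j) : ∑ j, D.eps (o1 j * b) • o2 j = act D b 1 := by
  have hl := D.lam_ne
  have h1 := Delta_of_mul (D := D) (one_mem _) (n := 1) (β := fun _ => 1) (v := fun _ => 1)
    (fun _ => one_mem _) (fun _ => one_mem _) (fun a ha => by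
      simp [act_of_M1 (D := D) (one_mem _) (A_M1 ha)])
  have hv := act_one_V hb
  set v := act D b 1 with hvdef
  have h2 := sum_transfer (hΔ.symm.trans h1) (fun y z => D.eps (y * b) • z)
    (fun y z t => by simp [D2H.eps, D2H.pr, mul_add, add_mul, add_smul])
    (fun c y z => by
      simp only [D2H.eps, D2H.pr, smul_mul_assoc, mul_smul_comm, map_smul, smul_eq_mul, smul_smul]
      congr 1; ring)
    (fun y z t => by simp)
    (fun c y z => smul_comm _ _ _)
  rw [h2, Fintype.sum_prod_type]
  simp only [Finset.univ_unique, Finset.sum_singleton, mul_one]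
  have h3 : ∀ l, D.eps (rho D l * b) = D.T (v * (D.w * D.f1 l)) := by
    intro l
    rw [D2H.eps, pr_eq_act, act_mul, act_rho l (act_mem D _ _), mul_assoc, D.hT_tr, mul_assoc,
      T_e1_mul (mul_mem (V_B (w_V D)) (V_B (mul_mem hv (f1_V D l)))), ← mul_assoc D.w,
      D.hw_central _ (V_M1 hv) ((mem_V D).1 hv).2, inv_mul_cancel_left₀ hl, mul_assoc]
  have h4 := sum_transfer D.hf_symm (fun y z => D.T (v * (D.w * y)) • z)
    (fun y z t => by simp [mul_add, add_smul])
    (fun c y z => by simp [mul_smul])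
    (fun y z t => by simp)
    (fun c y z => smul_comm _ _ _)
  simp only [h3, h4]
  exact D.hw_dual _ (V_M1 hv) ((mem_V D).1 hv).2

theorem invariant_iff {m : ℕ} {o1 o2 : Fin m → R} (hΔ : D.Δ 1 = ∑ j, o1 j ⊗ₜ[k] o2 j) {x : R}
    (hx : x ∈ D.M1) : (∀ b ∈ D.B, act D b x = ∑ j, D.eps (o1 j * b) • act D (o2 j) x) ↔
      x ∈ D.M := by
  have h1 : ∀ b ∈ D.B, ∑ j, D.eps (o1 j * b) • act D (o2 j) x = act D b 1 * x := by
    intro b hb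
    have : ∑ j, D.eps (o1 j * b) • act D (o2 j) x = act D (∑ j, D.eps (o1 j * b) • o2 j) x := by
      simp only [act, Finset.sum_mul, map_sum, Finset.smul_sum, smul_mul_assoc, map_smul]
      exact Finset.sum_congr rfl fun j _ => smul_comm _ _ _
    rw [this, sum_eps hb hΔ, act_of_M1 (act_mem D _ _) hx]
  constructor
  · intro h
    have h2 := h _ (e2_B D)
    -- the Jones idempotent `e₂` acts as the conditional expectation `E_M`
    have h3 : ∀ y ∈ D.M1, act D D.e2 y = D.EM y := fun y hy =>
      act_eq (D.hMM1 (D.hEM_mem y hy)) (by rw [D.he2_jones y hy, D.he2_jones' y hy])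
    rw [h1 _ (e2_B D), h3 x hx, h3 1 (one_mem _), D.hEM_one, one_mul] at h2
    rw [← h2]; exact D.hEM_mem x hx
  · intro hxM b hb
    rw [h1 b hb, ← act_mul_M b 1 hxM, one_mul]

theorem act_eq_sum_pr {m a : R} (hm : m ∈ D.M) (ha : a ∈ D.A) {n : ℕ} {a1 a2 : Fin n → R}
    (h12 : ∀ i, a1 i ∈ D.A ∧ a2 i ∈ D.A)
    (h : ∀ b' ∈ D.B, ∀ b'' ∈ D.B, ∑ i, D.pr (a1 i) b' * D.pr (a2 i) b'' = D.pr a (b' * b''))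
    {b : R} (hb : b ∈ D.B) : act D b (m * a) = ∑ i, D.pr (a2 i) b • (m * a1 i) := by
  have key : act D b a = ∑ i, D.pr (a2 i) b • a1 i := by
    rw [← sub_eq_zero]
    refine pr_nondegA (sub_mem (act_A (B_C hb) ha)
      (sum_mem fun i _ => D.A.smul_mem (h12 i).1 _)) fun b' hb' => ?_
    have h1 : D.pr (act D b a) b' = D.pr a (b' * b) := by
      rw [pr_eq_act, pr_eq_act, act_mul]
    have h2 : D.pr (act D b a - ∑ i, D.pr (a2 i) b • a1 i) b'
        = D.pr (act D b a) b' - ∑ i, D.pr (a1 i) b' * D.pr (a2 i) b := by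
      simp only [D2H.pr, sub_mul, map_sub, mul_sub, Finset.sum_mul, map_sum, Finset.mul_sum,
        smul_mul_assoc, map_smul, smul_eq_mul]
      congr 1
      exact Finset.sum_congr rfl fun i _ => by ring
    rw [h2, h1, h b' hb' b hb, sub_self]
  rw [act_M_mul hb hm, key, Finset.mul_sum]
  exact Finset.sum_congr rfl fun i _ => by rw [mul_smul_comm]

/-! ### The antipode -/

/-- The action expressed through the antipode: `E_{M₁}(e₂ w x S(b)) = λ w (b ⊳ x)`. -/
theorem EM1_S {b x : R} (hb : b ∈ D.B) (hx : x ∈ D.M1) :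
    D.EM1 (D.e2 * D.w * x * D.S b) = D.lam • (D.w * act D b x) := by
  have hl := D.lam_ne
  have hS := D.hS_mem b ((mem_B D).1 hb)
  obtain ⟨β, hβ, hact⟩ := exists_act (D := D)
    (D.lam⁻¹ • D.EM1 ∘ₗ LinearMap.mulRight k (D.S b) ∘ₗ LinearMap.mulLeft k (D.e2 * D.w))
    (fun x _ => D.M1.smul_mem (D.hEM1_mem _) _)
    (by
      intro m hm x hx
      simp only [LinearMap.smul_apply, LinearMap.comp_apply, LinearMap.mulLeft_apply,
        LinearMap.mulRight_apply]
      rw [mul_smul_comm, ← D.hEM1_left m (D.hMM1 hm), ← mul_assoc _ m x, mul_assoc D.e2 D.w m,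
        D.hw_mem.2 m hm, ← mul_assoc D.e2 m, D.he2_M m hm]
      simp only [mul_assoc])
    (by
      intro m hm x hx
      simp only [LinearMap.smul_apply, LinearMap.comp_apply, LinearMap.mulLeft_apply,
        LinearMap.mulRight_apply]
      rw [smul_mul_assoc, ← D.hEM1_right m (D.hMM1 hm), mul_assoc _ _ m, hS m hm]
      simp only [mul_assoc])
  simp only [LinearMap.smul_apply, LinearMap.comp_apply, LinearMap.mulLeft_apply,
        LinearMap.mulRight_apply] at hact
  -- `w` can be moved across `e₁` at the cost of replacing it by `w'` in `U`
  obtain ⟨w', hw', he⟩ : ∃ w' ∈ D.U, D.e1 * D.w = D.e1 * w' := by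
    refine ⟨D.lam⁻¹ • D.EM (D.e1 * D.w),
      D.U.smul_mem (EM_U (mul_mem (e1_A D) (V_A (w_V D)))) _, ?_⟩
    rw [mul_smul_comm]; exact D.hPP1' _ D.hw_mem.1
  have hw'M := ((mem_U D).1 hw').1
  have hwb := mul_mem (V_B (w_V D)) hb
  have hβ' : β = D.w * b := by
    rw [← sub_eq_zero]
    refine pr_nondegB (sub_mem hβ hwb) fun a ha => ?_
    have h0 : D.pr a (β - D.w * b) = D.pr a β - D.pr a (D.w * b) := by
      simp only [D2H.pr, mul_sub, map_sub]
    have h1 : D.pr a β = D.pr (w' * a) b := by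
      have hdef : D.pr (w' * a) b = _ := D.hS_def (w' * a) (A_M1 (mul_mem (U_A hw') ha))
        ((mem_A D).1 (mul_mem (U_A hw') ha)).2 b ((mem_B D).1 hb)
      have h2 : D.e2 * D.w * (w' * a) = w' * D.e2 * D.w * a := by
        rw [← D.he2_M _ hw'M, mul_assoc D.e2 w', ← D.hw_mem.2 _ hw'M]; simp only [mul_assoc]
      rw [hdef, pr_eq_act, hact a (A_M1 ha), smul_mul_assoc, smul_mul_assoc, mul_assoc,
        ← D.hEM1_right _ (mul_mem D.he1_mem D.hw_mem.1), map_smul, D.hTEM1, he, ← mul_assoc,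
        D.hT_tr, smul_eq_mul, ← mul_assoc]
      congr 1
      · ring
      · rw [mul_assoc (D.S b * D.e1), mul_assoc (D.S b * D.e1), h2, D.hT_tr (D.S b * D.e1)]
        simp only [mul_assoc]
    have h3 : D.pr a (D.w * b) = D.pr (w' * a) b := by
      have h4 : a * D.e2 * D.e1 * D.w * (D.w * b) = a * D.e2 * D.e1 * D.w * b * w' := by
        calc _ = a * D.e2 * (D.e1 * D.w) * (D.w * b) := by simp only [mul_assoc]
          _ = a * D.e2 * D.e1 * (w' * (D.w * b)) := by rw [he]; simp only [mul_assoc]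
          _ = _ := by rw [← (mem_B D).1 hwb _ hw'M]; simp only [mul_assoc]
      rw [pr_eq, pr_eq, h4, D.hT_tr _ w']
      simp only [mul_assoc]
    rw [h0, h1, h3, sub_self]
  have h5 := hact x hx
  rw [hβ', act_mul, act_of_M1 D.hw_mem.1 (act_mem D _ _)] at h5
  rw [h5, smul_smul, mul_inv_cancel₀ hl, one_smul]

theorem T_S {b y y' : R} (hb : b ∈ D.B) (hy : y ∈ D.M1) (hy' : y' ∈ D.M1) :
    D.T (D.S b * y' * (D.e2 * (D.w * y))) = D.T (b * y * D.e2 * (y' * D.w)) := by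
  have h1 : D.T (D.S b * y' * (D.e2 * (D.w * y))) = D.T (D.e2 * D.w * y * D.S b * y') := by
    rw [D.hT_tr]; simp only [mul_assoc]
  rw [h1, ← D.hTEM1, D.hEM1_right _ hy', EM1_S hb hy, act_e2,
    T_e2 D (act_mem D _ _) (mul_mem hy' D.hw_mem.1), smul_mul_assoc, map_smul, smul_eq_mul,
    mul_assoc, D.hT_tr]
  simp only [mul_assoc]

/-! ### The dual commutation rule -/

/-- The element `⟨a, b₍₁₎⟩ b₍₂₎` of `B` is obtained from `b a` by moving `a` past `e₁ w`. -/
theorem e1_w_mul {a b : R} (ha : a ∈ D.A) (hb : b ∈ D.B) {n : ℕ} {b1 b2 : Fin n → R}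
    (h2 : ∀ i, b2 i ∈ D.B) (hΔ : D.Δ b = ∑ i, b1 i ⊗ₜ[k] b2 i) :
    D.e1 * (D.w * ∑ i, D.pr a (b1 i) • b2 i) = D.e1 * (D.w * b * a) := by
  have hl := D.lam_ne
  have hc : D.w * b * a ∈ D.C := mul_mem (B_C (mul_mem (V_B (w_V D)) hb)) (A_C ha)
  set d' := D.winv * (D.lam⁻¹ • EB D (D.e1 * (D.w * b * a))) with hd'
  have hd'B : d' ∈ D.B := mul_mem (V_B (winv_V D))
    (D.B.smul_mem (EB_mem (mul_mem (A_C (e1_A D)) hc)) _)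
  have h : D.e1 * (D.w * d') = D.e1 * (D.w * b * a) := by
    rw [hd', ← mul_assoc D.w, D.hw_inv.1, one_mul, mul_smul_comm, e1_mul_EB hc, smul_smul,
      inv_mul_cancel₀ hl, one_smul]
  rw [← h]
  congr 2
  rw [← sub_eq_zero]
  refine pr_nondegB (sub_mem (sum_mem fun i _ => D.B.smul_mem (h2 i) _) hd'B) fun a' ha' => ?_
  have h3 : D.pr a' d' = D.pr (a * a') b := by
    have h4 : a' * D.e2 * D.e1 * D.w * d' = a' * D.e2 * (D.e1 * (D.w * d')) := by
      simp only [mul_assoc]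
    rw [pr_eq, pr_eq, h4, h]
    congr 1
    rw [← mul_assoc, ← mul_assoc, D.hT_tr]
    simp only [mul_assoc]
  rw [← prL_apply, map_sub, map_sum]
  simp only [map_smul, prL_apply]
  rw [h3, pr_mul hb hΔ ha ha', sub_eq_zero]
  rfl

theorem sum_pr_mul_V {a b v : R} (ha : a ∈ D.A) (hb : b ∈ D.B) (hv : v ∈ D.V) {n : ℕ}
    {b1 b2 : Fin n → R} (h2 : ∀ i, b2 i ∈ D.B) (hΔ : D.Δ b = ∑ i, b1 i ⊗ₜ[k] b2 i) :
    ∑ i, D.pr (a * v) (b1 i) • b2 i = (∑ i, D.pr a (b1 i) • b2 i) * v := by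
  have h3 := e1_w_mul (mul_mem ha (V_A hv)) hb h2 hΔ
  have h4 := e1_w_mul ha hb h2 hΔ
  have hB : ∀ a, ∑ i, D.pr a (b1 i) • b2 i ∈ D.B :=
    fun a => sum_mem fun i _ => D.B.smul_mem (h2 i) _
  rw [← sub_eq_zero]
  have h5 := eq_zero_of_e1_mul (D := D)
    (b := D.w * (∑ i, D.pr (a * v) (b1 i) • b2 i - (∑ i, D.pr a (b1 i) • b2 i) * v))
    (mul_mem (V_B (w_V D)) (sub_mem (hB _) (mul_mem (hB _) (V_B hv)))) (by
      rw [mul_sub, mul_sub, h3, ← mul_assoc D.w _ v, ← mul_assoc D.e1 _ v, h4, sub_eq_zero]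
      simp only [mul_assoc])
  rw [← one_mul (_ - _), ← D.hw_inv.2, mul_assoc, h5, mul_zero]

theorem winv_e1_w_mul {b : R} (hb : b ∈ D.B) {n : ℕ} {b1 b2 : Fin n → R}
    (h1 : ∀ i, b1 i ∈ D.B) (h2 : ∀ i, b2 i ∈ D.B) (hΔ : D.Δ b = ∑ i, b1 i ⊗ₜ[k] b2 i) :
    D.winv * D.e1 * D.w * b
      = ∑ i, b2 i * D.winv * (D.lam⁻¹ • D.EM1 (D.e2 * D.e1 * D.w * b1 i)) := by
  have hl := D.lam_ne
  have hwC := B_C (V_B (w_V D))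
  have hwiC := B_C (V_B (winv_V D))
  rw [← sub_eq_zero]
  refine nondegC (sub_mem (mul_mem (mul_mem (mul_mem hwiC (A_C (e1_A D))) hwC) (B_C hb))
    (sum_mem fun i _ => mul_mem (mul_mem (B_C (h2 i)) hwiC) (D.C.smul_mem (A_C (EM1_A
      (mul_mem (mul_mem (mul_mem (B_C (e2_B D)) (A_C (e1_A D))) hwC) (B_C (h1 i))))) _)))
    fun a ha b'' hb'' => ?_
  rw [sub_mul, map_sub, sub_eq_zero]
  set d := ∑ i, D.pr a (b1 i) • b2 i with hd
  have hdB : d ∈ D.B := sum_mem fun i _ => D.B.smul_mem (h2 i) _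
  have hL : D.T (D.winv * D.e1 * D.w * b * (a * b'')) = D.lam * D.T (d * b'') := by
    calc D.T (D.winv * D.e1 * D.w * b * (a * b''))
        = D.T (D.winv * ((D.e1 * (D.w * b * a)) * b'')) := by simp only [mul_assoc]
      _ = D.T (D.e1 * (D.w * d * b'' * D.winv)) := by
          rw [← e1_w_mul ha hb h2 hΔ, D.hT_tr]; simp only [mul_assoc]; rfl
      _ = D.lam * D.T (D.winv * (D.w * d * b'')) := by
          rw [T_e1_mul (mul_mem (mul_mem (mul_mem (V_B (w_V D)) hdB) hb'') (V_B (winv_V D))),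
            D.hT_tr]
      _ = _ := by rw [← mul_assoc, ← mul_assoc, D.hw_inv.2, one_mul]
  have hR : ∀ i, D.T (b2 i * D.winv * (D.lam⁻¹ • D.EM1 (D.e2 * D.e1 * D.w * b1 i)) * (a * b''))
      = D.lam * D.pr (a * D.EM1 (b'' * b2 i) * D.winv) (b1 i) := by
    intro i
    set X := D.EM1 (D.e2 * D.e1 * D.w * b1 i) with hX
    have hXM : X ∈ D.M1 := D.hEM1_mem _
    calc _ = D.lam⁻¹ * D.T (X * a * (b'' * b2 i * D.winv)) := by
          rw [mul_smul_comm, smul_mul_assoc, map_smul, smul_eq_mul, mul_assoc, D.hT_tr]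
          simp only [mul_assoc]
      _ = D.lam⁻¹ * D.T (X * (a * D.EM1 (b'' * b2 i) * D.winv)) := by
          rw [← D.hTEM1, D.hEM1_left _ (mul_mem hXM (A_M1 ha)), D.hEM1_right _ D.hwinv_mem.1]
          simp only [mul_assoc]
      _ = D.lam⁻¹ * D.T (D.e2 * D.e1 * D.w * b1 i * (a * D.EM1 (b'' * b2 i) * D.winv)) := by
          rw [hX, ← D.hEM1_right _
            (mul_mem (mul_mem (A_M1 ha) (D.hEM1_mem _)) D.hwinv_mem.1), D.hTEM1]
      _ = _ := by
          rw [pr_eq, D.hT_tr]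
          simp only [mul_assoc]
          field_simp
  rw [Finset.sum_mul, map_sum, Finset.sum_congr rfl fun i _ => hR i, hL, ← Finset.mul_sum]
  congr 1
  have hv : ∀ i, D.EM1 (b'' * b2 i) = ∑ l, D.T (b'' * b2 i * (D.w * D.f2 l)) • D.f1 l := by
    intro i
    have hv := EM1_V (mul_mem hb'' (h2 i))
    rw [← D.hw_dual _ (V_M1 hv) ((mem_V D).1 hv).2]
    refine Finset.sum_congr rfl fun l _ => ?_
    rw [← D.hEM1_right _ (V_M1 (mul_mem (w_V D) (f2_V D l))), D.hTEM1]
  have hpr : ∀ i, D.pr (a * D.EM1 (b'' * b2 i) * D.winv) (b1 i)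
      = ∑ l, D.T (b'' * b2 i * (D.w * D.f2 l)) * D.pr (a * (D.f1 l * D.winv)) (b1 i) := by
    intro i
    rw [hv]
    simp only [D2H.pr, Finset.mul_sum, Finset.sum_mul, map_sum, mul_smul_comm, smul_mul_assoc,
      map_smul, smul_eq_mul, mul_assoc]
    exact Finset.sum_congr rfl fun l _ => by ring
  simp only [hpr]
  rw [Finset.sum_comm]
  have hlast : ∀ l, ∑ i, D.T (b'' * b2 i * (D.w * D.f2 l)) * D.pr (a * (D.f1 l * D.winv)) (b1 i)
      = D.T (b'' * d * (D.f1 l * D.f2 l)) := by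
    intro l
    have h3 := sum_pr_mul_V ha hb (mul_mem (f1_V D l) (winv_V D)) h2 hΔ
    calc _ = D.T (b'' * (∑ i, D.pr (a * (D.f1 l * D.winv)) (b1 i) • b2 i) * (D.w * D.f2 l)) := by
          simp only [Finset.mul_sum, Finset.sum_mul, map_sum, mul_smul_comm, smul_mul_assoc,
            map_smul, smul_eq_mul]
          exact Finset.sum_congr rfl fun i _ => mul_comm _ _
      _ = D.T (b'' * d * (D.f1 l * ((D.winv * D.w) * D.f2 l))) := by
          rw [h3]; simp only [mul_assoc]; rfl
      _ = _ := by rw [D.hw_inv.2, one_mul]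
  simp only [hlast]
  rw [← map_sum, ← Finset.mul_sum, D.hf_one, mul_one, D.hT_tr]

/-- The commutation rule for the dual action: moving `x ∈ M₁` past `b` from the left, with the
twist by `w` caused by the form of the pairing. -/
theorem winv_mul_w_mul {b : R} (hb : b ∈ D.B) {n : ℕ} {b1 b2 : Fin n → R}
    (h1 : ∀ i, b1 i ∈ D.B) (h2 : ∀ i, b2 i ∈ D.B) (hΔ : D.Δ b = ∑ i, b1 i ⊗ₜ[k] b2 i)
    {x : R} (hx : x ∈ D.M1) :
    D.winv * x * D.w * b
      = ∑ i, b2 i * D.winv * (D.lam⁻¹ • D.EM1 (D.e2 * x * D.w * b1 i)) := by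
  replace hx : x ∈ D.M1.toSubmodule := hx
  rw [D.hM1_gen] at hx
  induction hx using Submodule.span_induction with
  | mem z hz =>
    obtain ⟨m, hm, m', hm', rfl⟩ := hz
    have hL : D.winv * (m * D.e1 * m') * D.w * b = m * (D.winv * D.e1 * D.w * b) * m' := by
      have e1 := D.hwinv_mem.2 m hm
      have e2 := (mem_B D).1 (mul_mem (V_B (w_V D)) hb) m' hm'
      calc _ = (D.winv * m) * D.e1 * (m' * (D.w * b)) := by simp only [mul_assoc]
        _ = _ := by rw [e1, ← e2]; simp only [mul_assoc]
    rw [hL, winv_e1_w_mul hb h1 h2 hΔ, Finset.mul_sum, Finset.sum_mul]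
    refine Finset.sum_congr rfl fun i _ => ?_
    have e1 : D.e2 * (m * D.e1 * m') * D.w * b1 i = m * (D.e2 * D.e1 * D.w * b1 i) * m' := by
      have e2 := (mem_B D).1 (mul_mem (V_B (w_V D)) (h1 i)) m' hm'
      calc _ = (D.e2 * m) * D.e1 * (m' * (D.w * b1 i)) := by simp only [mul_assoc]
        _ = _ := by rw [D.he2_M m hm, ← e2]; simp only [mul_assoc]
    have e3 := (mem_B D).1 (mul_mem (h2 i) (V_B (winv_V D))) m hm
    rw [e1, D.hEM1_right _ (D.hMM1 hm'), D.hEM1_left _ (D.hMM1 hm), mul_smul_comm, mul_smul_comm,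
      mul_smul_comm, smul_mul_assoc, ← mul_assoc m, ← e3]
    simp only [mul_assoc]
  | zero => simp
  | add a c _ _ ha hc => simp only [mul_add, add_mul, map_add, smul_add, Finset.sum_add_distrib,
      ha, hc]
  | smul r a _ ha =>
    simp only [mul_smul_comm, smul_mul_assoc, map_smul, ha, Finset.smul_sum]
    exact Finset.sum_congr rfl fun i _ => smul_comm _ _ _

/-! ### The formula `b ⊳ x = b₍₁₎ x S(b₍₂₎)` -/

theorem act_eq_S_of_A {b a : R} (hb : b ∈ D.B) (ha : a ∈ D.A) {n : ℕ} {b1 b2 : Fin n → R}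
    (h1 : ∀ i, b1 i ∈ D.B) (h2 : ∀ i, b2 i ∈ D.B) (hΔ : D.Δ b = ∑ i, b1 i ⊗ₜ[k] b2 i) :
    act D b a = ∑ i, b1 i * a * D.S (b2 i) := by
  have hSB : ∀ i, D.S (b2 i) ∈ D.B :=
    fun i => (mem_B D).2 (D.hS_mem _ ((mem_B D).1 (h2 i)))
  have key : ∀ y ∈ D.A, ∀ x ∈ D.A, D.T (act D b a * (y * D.e2 * (x * D.w)))
      = D.T ((∑ i, b1 i * a * D.S (b2 i)) * (y * D.e2 * (x * D.w))) := by
    intro y hy x hx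
    have hi : ∀ i, D.T (b1 i * a * D.S (b2 i) * (y * D.e2 * (x * D.w)))
        = D.T (b2 i * D.winv * (D.lam⁻¹ • D.EM1 (D.e2 * x * D.w * b1 i)) *
            (a * D.e2 * (y * D.w))) := by
      intro i
      set X := D.lam⁻¹ • D.EM1 (D.e2 * x * D.w * b1 i) with hX
      have hXM : X ∈ D.M1 := D.M1.smul_mem (D.hEM1_mem _) _
      have h3 : D.e2 * (x * D.w * b1 i) = D.e2 * X := by
        rw [hX, D.hPP2', mul_smul_comm]; simp only [mul_assoc]
      calc _ = D.T (D.S (b2 i) * y * (D.e2 * (x * D.w * b1 i)) * a) := by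
            rw [mul_assoc (b1 i * a), D.hT_tr]; simp only [mul_assoc]
        _ = D.T (D.S (b2 i) * y * (D.e2 * ((D.w * D.winv) * (X * a)))) := by
            rw [h3, D.hw_inv.1, one_mul]; simp only [mul_assoc]
        _ = D.T (D.S (b2 i) * y * (D.e2 * (D.w * (D.winv * X * a)))) := by
            simp only [mul_assoc]
        _ = _ := by
            rw [T_S (h2 i) (mul_mem (mul_mem D.hwinv_mem.1 hXM) (A_M1 ha)) (A_M1 hy)]
            simp only [mul_assoc]
    have hR : D.T ((∑ i, b1 i * a * D.S (b2 i)) * (y * D.e2 * (x * D.w)))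
        = D.T (D.winv * x * D.w * b * (a * D.e2 * (y * D.w))) := by
      rw [winv_mul_w_mul hb h1 h2 hΔ (A_M1 hx), Finset.sum_mul, Finset.sum_mul, map_sum, map_sum]
      exact Finset.sum_congr rfl fun i _ => hi i
    rw [hR]
    have hM := act_mem D b a
    calc _ = D.T (act D b a * y * D.e2 * (x * D.w)) := by simp only [mul_assoc]
      _ = D.lam * D.T (x * D.w * act D b a * y) := by
          rw [T_e2 D (mul_mem hM (A_M1 hy)) (mul_mem (A_M1 hx) D.hw_mem.1), D.hT_tr]
          simp only [mul_assoc]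
      _ = D.T (x * D.w * (b * a * D.e2) * y) := by
          rw [act_e2, ← mul_assoc _ _ D.e2,
            T_e2 D (mul_mem (mul_mem (A_M1 hx) D.hw_mem.1) hM) (A_M1 hy)]
      _ = D.T (D.w * D.winv * (x * D.w * (b * a * D.e2) * y)) := by rw [D.hw_inv.1, one_mul]
      _ = _ := by rw [mul_assoc D.w, D.hT_tr D.w]; simp only [mul_assoc]
  rw [← sub_eq_zero]
  refine nondegC (sub_mem (A_C (act_A (B_C hb) ha)) (sum_mem fun i _ => mul_mem
    (mul_mem (B_C (h1 i)) (A_C ha)) (B_C (hSB i)))) fun a' ha' b'' hb'' => ?_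
  -- `a' b''` is a sum of elements `y e₂ x w` with `x, y ∈ A`, to which `key` applies
  have h4 : a' * b'' = ∑ j, act D (a' * b'') (D.zb j) * D.e2 * (D.wb j * D.winv * D.w) := by
    conv_lhs => rw [← mul_one (a' * b''), ← sum_z_e2_w D, Finset.mul_sum]
    refine Finset.sum_congr rfl fun j _ => ?_
    rw [← act_e2, mul_assoc (D.wb j), D.hw_inv.2, mul_one]
    simp only [mul_assoc]
  rw [h4, Finset.mul_sum, map_sum]
  refine Finset.sum_eq_zero fun j _ => ?_
  rw [sub_mul, map_sub, key _ (act_A (mul_mem (A_C ha') (B_C hb'')) (zb_A D j)) _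
    (mul_mem (wb_A D j) (V_A (winv_V D))), sub_self]

theorem act_eq_S {b x : R} (hb : b ∈ D.B) (hx : x ∈ D.M1) {n : ℕ} {b1 b2 : Fin n → R}
    (hΔ : D.Δ b = ∑ i, b1 i ⊗ₜ[k] b2 i) : act D b x = ∑ i, b1 i * x * D.S (b2 i) := by
  obtain ⟨m, c1, c2, h1, h2, hΔ'⟩ := exists_rep hb
  rw [sum_transfer (hΔ.symm.trans hΔ') (fun y z => y * x * D.S z)
    (fun y z t => by simp [add_mul]) (fun c y z => by simp)
    (fun y z t => by simp [mul_add]) (fun c y z => by simp)]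
  conv_lhs => rw [← D.hdualA1 x hx]
  rw [act_sum_right]
  have h3 : ∀ j, act D b (D.EM (x * D.zb j) * D.wb j)
      = ∑ i, c1 i * (D.EM (x * D.zb j) * D.wb j) * D.S (c2 i) := by
    intro j
    have hm := D.hEM_mem _ (mul_mem hx (D.hzb j).1)
    rw [act_M_mul hb hm, act_eq_S_of_A hb (wb_A D j) h1 h2 hΔ', Finset.mul_sum]
    refine Finset.sum_congr rfl fun i _ => ?_
    rw [← mul_assoc (c1 i), (mem_B D).1 (h1 i) _ hm]
    simp only [mul_assoc]
  simp only [h3]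
  rw [Finset.sum_comm]
  refine Finset.sum_congr rfl fun i _ => ?_
  rw [← Finset.sum_mul, ← Finset.mul_sum, D.hdualA1 x hx]

end Stmt15

/-- `b ⊳ x = λ⁻¹ E_{M₁}(b x e₂)` defines a left action of the weak
Hopf algebra `B` on `M₁` making `M₁` a left `B`-module algebra; it is characterized
by `b ⊳ (m a) = m ⟨a₍₂₎, b⟩ a₍₁₎` for `m ∈ M`, `a ∈ A`; it satisfies
`b ⊳ x = b₍₁₎ x S(b₍₂₎)`; and the invariant subalgebra is `M₁^B = M`. -/
theorem stmt15 {k : Type*} [Field k] {R : Type*} [Ring R] [Algebra k R] (D : D2H k R) :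
    -- the action takes values in M₁
    (∀ b ∈ D2.B D.toD2S.toD2, ∀ x ∈ D.M1, act D b x ∈ D.M1) ∧
    -- it is a left module action
    (∀ b ∈ D2.B D.toD2S.toD2, ∀ b' ∈ D2.B D.toD2S.toD2, ∀ x ∈ D.M1,
      act D (b * b') x = act D b (act D b' x)) ∧
    (∀ x ∈ D.M1, act D 1 x = x) ∧
    -- the measuring axiom of a module algebra
    (∀ b ∈ D2.B D.toD2S.toD2,
      ∀ (m : ℕ) (b1 b2 : Fin m → R), D.Δ b = ∑ i, b1 i ⊗ₜ[k] b2 i →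
      ∀ x ∈ D.M1, ∀ y ∈ D.M1,
        act D b (x * y) = ∑ i, act D (b1 i) x * act D (b2 i) y) ∧
    -- the unit axiom: b ⊳ 1 = ε_t(b)
    (∀ b ∈ D2.B D.toD2S.toD2,
      ∀ (m0 : ℕ) (o1 o2 : Fin m0 → R), D.Δ 1 = ∑ j, o1 j ⊗ₜ[k] o2 j →
        act D b 1 = ∑ j, D.eps (o1 j * b) • o2 j) ∧
    -- characterization: b ⊳ (m a) = m ⟨a₍₂₎, b⟩ a₍₁₎ (for any representation
    -- a₍₁₎ ⊗ a₍₂₎ of the comultiplication of A dual to the multiplication of B)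
    (∀ m ∈ D.M, ∀ a ∈ D2.A D.toD2S.toD2,
      ∀ (mA : ℕ) (a1 a2 : Fin mA → R),
        (∀ i, a1 i ∈ D2.A D.toD2S.toD2 ∧ a2 i ∈ D2.A D.toD2S.toD2) →
        (∀ b' ∈ D2.B D.toD2S.toD2, ∀ b'' ∈ D2.B D.toD2S.toD2,
          ∑ i, D.pr (a1 i) b' * D.pr (a2 i) b'' = D.pr a (b' * b'')) →
        ∀ b ∈ D2.B D.toD2S.toD2,
          act D b (m * a) = ∑ i, D.pr (a2 i) b • (m * a1 i)) ∧
    -- the simplifying formula b ⊳ x = b₍₁₎ x S(b₍₂₎)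
    (∀ b ∈ D2.B D.toD2S.toD2,
      ∀ (m : ℕ) (b1 b2 : Fin m → R), D.Δ b = ∑ i, b1 i ⊗ₜ[k] b2 i →
      ∀ x ∈ D.M1, act D b x = ∑ i, b1 i * x * D.S (b2 i)) ∧
    -- the invariant subalgebra is M₁^B = M
    (∀ (m0 : ℕ) (o1 o2 : Fin m0 → R), D.Δ 1 = ∑ j, o1 j ⊗ₜ[k] o2 j →
      ∀ x ∈ D.M1,
        ((∀ b ∈ D2.B D.toD2S.toD2,
            act D b x = ∑ j, D.eps (o1 j * b) • act D (o2 j) x) ↔ x ∈ D.M)) := by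
  refine ⟨fun b _ x _ => Stmt15.act_mem D b x, fun b _ b' _ x _ => Stmt15.act_mul b b' x,
    fun x hx => ?_, fun b hb m b1 b2 hΔ x hx y _ => Stmt15.act_mul_right hb hΔ hx,
    fun b hb m0 o1 o2 hΔ => (Stmt15.sum_eps hb hΔ).symm,
    fun m hm a ha mA a1 a2 h12 h b hb => Stmt15.act_eq_sum_pr hm ha h12 h hb,
    fun b hb m b1 b2 hΔ x hx => Stmt15.act_eq_S hb hx hΔ,
    fun m0 o1 o2 hΔ x hx => Stmt15.invariant_iff hΔ hx⟩
  rw [Stmt15.act_of_M1 (one_mem _) hx, one_mul]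
end

section
/- The map ψ : M₁ # B → M₂, x # b ↦ x b, is an algebra isomorphism from the smash product of M₁ by the weak Hopf algebra B (with respect to the action b ⊳ x = λ⁻¹ E_{M₁}(b x e₂)) onto M₂. -/
/-!
Since `v ⊳ 1 = v` for `v ∈ V`, the map `ψ` is well defined on the quotient, and the dual bases
`uᵢ, vᵢ ∈ B` of `E_{M₁}` provide its inverse `r ↦ ∑ E_{M₁}(r uᵢ) ⊗ vᵢ`.

Multiplicativity amounts to `b y = (b₍₁₎ ⊳ y) b₍₂₎` for `b ∈ B` and `y ∈ M₁` (`Smash.comm_M1`).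
As `M₁ = M e₁ M` and `B` commutes with `M`, only `y = e₁` matters (`Smash.comm_e1`). Put
`φ(b) = E_{M₁}(b e₁ e₂) = λ (b ⊳ e₁)`; it maps `B` to `A`, with inverse
`λ⁻² θ`, `θ(a) = ∑ xᵢ a e₂ e₁ yᵢ`. Three facts give the case `y = e₁`.

* Under `φ` the pairing of `A` and `B` becomes the trace form of `B` (`Smash.pair_phi`), for which
  `uᵢ f₁` and `w f₂ vᵢ` are dual bases (`Smash.B_dual`). So `b₍₂₎` can be recovered from its
  pairings with the elements `φ(uᵢ f₁ w⁻¹)`, and the pairing is non-degenerate on `B`.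
* For `β ∈ B` the slice `b₍₁₎ ⟨φ(β), b₍₂₎⟩` is determined by the definition of `Δ`; its image under
  `φ` is a multiple of `E_{M₁}(b e₁ β)` (`Smash.phi_slice`). This rests on the identity
  `T(m e₁ m' e₂ e₁ w p) = T(φ(p) m' e₁ m w)` for `m, m' ∈ M`, `p ∈ B` (`Smash.pair_flip`), a
  consequence of the trace property of `T`.
* Substituting, the sum of the `φ(b₍₁₎) b₍₂₎` becomes the sum of the
  `λ E_{M₁}(b e₁ uᵢ) f₁ w⁻¹ w f₂ vᵢ`, which is `λ b e₁`.
-/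

open scoped TensorProduct
open TensorProduct

open D2 D2H

/-! ### The maps `φ`, `θ` and basic trace identities -/

namespace Smash

variable {k : Type*} [Field k] {R : Type*} [Ring R] [Algebra k R] (D : D2H k R)

/-- The Fourier-type map `φ(b) = E_{M₁}(b e₁ e₂)`, which sends `B` to `A`;
it equals `λ (b ⊳ e₁)`. -/
def phi : R →ₗ[k] R where
  toFun b := D.EM1 (b * D.e1 * D.e2)
  map_add' a b := by simp [add_mul]
  map_smul' c b := by simp

/-- The map `θ(a) = ∑ xᵢ a e₂ e₁ yᵢ`, which sends `A` to `B` and inverts `φ` up to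
the factor `λ²`. -/
def theta (a : R) : R := ∑ i, D.xb i * a * D.e2 * D.e1 * D.yb i

/-- `b ↦ b ⊳ y` as a linear map. -/
noncomputable def actL (y : R) : R →ₗ[k] R where
  toFun b := act D b y
  map_add' a b := by simp [act, add_mul]
  map_smul' c b := by
    simp only [act, smul_mul_assoc, map_smul, RingHom.id_apply]
    rw [smul_comm]

theorem T_cyc (a b c : R) : D.T (a * b * c) = D.T (b * c * a) := by
  rw [mul_assoc, D.hT_tr]

theorem EM1_e2 {x : R} (hx : x ∈ D.M1) : D.EM1 (x * D.e2) = D.lam • x := by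
  simpa using D.hEM1_e2 x hx 1 (one_mem _)

theorem act_V {v : R} (hv : v ∈ D.M1) : act D v 1 = v := by
  rw [act, mul_one, EM1_e2 D hv, smul_smul, inv_mul_cancel₀ D.lam_ne, one_smul]

/-- The dual bases of `E` resolve the identity: the sum is a left unit on `M e₁ M = M₁`. -/
theorem sum_xe1y : ∑ i, D.xb i * D.e1 * D.yb i = 1 := by
  have key : ∀ z ∈ D.M1, (∑ i, D.xb i * D.e1 * D.yb i) * z = z := by
    intro z hz
    have hz' : z ∈ Submodule.span k {z : R | ∃ m ∈ D.M, ∃ m' ∈ D.M, z = m * D.e1 * m'} := by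
      rw [← D.hM1_gen]; exact hz
    induction hz' using Submodule.span_induction with
    | mem z h =>
      obtain ⟨m, hm, m', hm', rfl⟩ := h
      rw [Finset.sum_mul]
      have : ∀ i, D.xb i * D.e1 * D.yb i * (m * D.e1 * m')
          = D.xb i * D.E (D.yb i * m) * (D.e1 * m') := by
        intro i
        have h1 := D.he1_jones _ (mul_mem (D.hyb i) hm)
        rw [D.he1_jones' _ (mul_mem (D.hyb i) hm)] at h1
        calc _ = D.xb i * (D.e1 * (D.yb i * m) * D.e1) * m' := by noncomm_ring
          _ = _ := by rw [h1]; noncomm_ring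
      simp_rw [this]
      rw [← Finset.sum_mul, D.hdual2 m hm, mul_assoc]
    | zero => simp
    | add a b ha hb iha ihb =>
      have m1 : a ∈ D.M1.toSubmodule := by rw [D.hM1_gen]; exact ha
      have m2 : b ∈ D.M1.toSubmodule := by rw [D.hM1_gen]; exact hb
      rw [mul_add, iha m1, ihb m2]
    | smul c a ha iha =>
      have m1 : a ∈ D.M1.toSubmodule := by rw [D.hM1_gen]; exact ha
      rw [mul_smul_comm, iha m1]
  simpa using key 1 (one_mem _)

/-- `T(e₁ b) = λ T(b)` for `b` commuting with `M`. -/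
theorem T_e1 {b : R} (hb : ∀ y ∈ D.M, b * y = y * b) :
    D.T (D.e1 * b) = D.lam * D.T b := by
  have h : D.T b = ∑ i, D.T (D.e1 * b * (D.yb i * D.xb i)) := by
    conv_lhs => rw [← one_mul b, ← sum_xe1y D]
    rw [Finset.sum_mul, map_sum]
    refine Finset.sum_congr rfl fun i _ => ?_
    rw [show D.xb i * D.e1 * D.yb i * b = D.xb i * (D.e1 * (D.yb i * b)) by noncomm_ring,
      D.hT_tr, ← hb _ (D.hyb i)]
    noncomm_ring
  rw [← map_sum, ← Finset.mul_sum, D.hindex'] at h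
  rw [h]
  simp [D.lam_ne]

/-! ### Dual bases of the trace on `V` and `B` -/

/-- Dual basis property of `f₁ ⊗ w f₂` for `T` on `V`, with the two legs exchanged. -/
theorem V_dual {v : R} (hv : v ∈ D.M1) (hv' : ∀ y ∈ D.M, v * y = y * v) :
    ∑ l, D.T (v * D.f1 l) • (D.w * D.f2 l) = v := by
  set v' := D.winv * v with hv'def
  have hm : v' ∈ D.M1 := mul_mem D.hwinv_mem.1 hv
  have hc : ∀ y ∈ D.M, v' * y = y * v' := by
    intro y hy
    rw [hv'def, mul_assoc, hv' y hy, ← mul_assoc, D.hwinv_mem.2 y hy, mul_assoc]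
  have h1 := D.hw_dual v' hm hc
  let G : R ⊗[k] R →ₗ[k] R := TensorProduct.lift
    (LinearMap.mk₂ k (fun p q => D.T (v' * (D.w * q)) • p)
      (by intros; rw [smul_add]) (by intros; rw [smul_comm])
      (by intros; simp [mul_add, add_smul]) (by intros; simp [mul_smul]))
  have h2 := congrArg G D.hf_symm
  simp only [map_sum, G, TensorProduct.lift.tmul, LinearMap.mk₂_apply] at h2
  rw [h1] at h2
  have h3 : v' * D.w = v := by
    rw [hv'def, mul_assoc, ← D.hw_central v hv hv', ← mul_assoc, D.hw_inv.2, one_mul]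
  have h4 : D.w * v' = v := by rw [hv'def, ← mul_assoc, D.hw_inv.1, one_mul]
  simp_rw [← mul_assoc, h3] at h2
  rw [← h4]
  conv_rhs => rw [h2]
  rw [Finset.mul_sum, h4]
  simp

theorem EM1_comm {c y : R} (hy : y ∈ D.M1) (h : c * y = y * c) :
    D.EM1 c * y = y * D.EM1 c := by
  rw [← D.hEM1_right y hy, h, D.hEM1_left y hy]

/-- The family `uᵢ f₁ ⊗ w f₂ vᵢ` is a pair of dual bases for `T` on `B`. -/
theorem B_dual {b : R} (hb : ∀ y ∈ D.M, b * y = y * b) :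
    ∑ i, ∑ l, D.T (b * (D.ub i * D.f1 l)) • (D.w * D.f2 l * D.vb i) = b := by
  conv_rhs => rw [← D.hdualB1 b]
  refine Finset.sum_congr rfl fun i _ => ?_
  have hc : ∀ y ∈ D.M, b * D.ub i * y = y * (b * D.ub i) := by
    intro y hy
    rw [mul_assoc, D.hub i y hy, ← mul_assoc, hb y hy, mul_assoc]
  have hv := V_dual D (D.hEM1_mem (b * D.ub i))
    (fun y hy => EM1_comm D (D.hMM1 hy) (hc y hy))
  conv_rhs => rw [← hv]
  rw [Finset.sum_mul]
  refine Finset.sum_congr rfl fun l _ => ?_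
  rw [← D.hEM1_right _ (D.hf1 l).1, D.hTEM1, smul_mul_assoc, mul_assoc b]

/-! ### The Fourier-type maps and the duality pairing -/

theorem mulB {a b : R} (ha : ∀ y ∈ D.M, a * y = y * a) (hb : ∀ y ∈ D.M, b * y = y * b) :
    ∀ y ∈ D.M, a * b * y = y * (a * b) := by
  intro y hy
  rw [mul_assoc, hb y hy, ← mul_assoc, ha y hy, mul_assoc]

theorem phi_mem (b : R) : phi D b ∈ D.M1 := D.hEM1_mem _

theorem phi_comm {b : R} (hb : ∀ y ∈ D.M, b * y = y * b) :
    ∀ y ∈ D.N, phi D b * y = y * phi D b := by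
  intro y hy
  have hyM := D.hNM hy
  refine EM1_comm D (D.hMM1 hyM) ?_
  rw [mul_assoc, D.he2_M y hyM, ← mul_assoc, mul_assoc b, D.he1_N y hy, ← mul_assoc, hb y hyM]
  noncomm_ring

/-- Through `φ`, the duality pairing between `A` and `B` becomes the trace form of `B`. -/
theorem pair_phi {β b : R} (hβ : ∀ y ∈ D.M, β * y = y * β) (hb : ∀ y ∈ D.M, b * y = y * b) :
    D.T (phi D β * D.e2 * D.e1 * D.w * b) = D.lam ^ 3 * D.T (β * D.w * b) := by
  have h1 : phi D β * D.e2 = D.lam • (β * D.e1 * D.e2) := by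
    rw [D.hPP2 (β * D.e1), smul_smul, mul_inv_cancel₀ D.lam_ne, one_smul]; rfl
  rw [h1]
  have h2 : D.lam • (β * D.e1 * D.e2) * D.e1 * D.w * b
      = (D.lam ^ 2) • (β * (D.e1 * (D.w * b))) := by
    have : β * D.e1 * D.e2 * D.e1 * D.w * b
      = β * (D.e1 * D.e2 * D.e1) * (D.w * b) := by noncomm_ring
    simp only [smul_mul_assoc, this, D.hbraid1, mul_smul_comm, smul_smul]
    simp only [mul_assoc, pow_two]
  rw [h2, map_smul, D.hT_tr, mul_assoc, T_e1 D (mulB D (mulB D D.hw_mem.2 hb) hβ), smul_eq_mul,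
    D.hT_tr (D.w * b), mul_assoc β]
  ring

/-- Non-degeneracy of the duality pairing in its second variable. -/
theorem B_ext {q q' : R} (hq : ∀ y ∈ D.M, q * y = y * q) (hq' : ∀ y ∈ D.M, q' * y = y * q')
    (h : ∀ a ∈ D.M1, (∀ y ∈ D.N, a * y = y * a) →
      D.T (a * D.e2 * D.e1 * D.w * q) = D.T (a * D.e2 * D.e1 * D.w * q')) : q = q' := by
  rw [← B_dual D hq, ← B_dual D hq']
  refine Finset.sum_congr rfl fun i _ => Finset.sum_congr rfl fun l _ => ?_
  have hβ := mulB D (mulB D (D.hub i) (D.hf1 l).2) D.hwinv_mem.2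
  have h1 := h _ (phi_mem D _) (phi_comm D hβ)
  rw [pair_phi D hβ hq, pair_phi D hβ hq', mul_assoc _ D.winv, D.hw_inv.2, mul_one] at h1
  have h2 := mul_left_cancel₀ (pow_ne_zero 3 D.lam_ne) h1
  rw [D.hT_tr q, D.hT_tr q', h2]

theorem theta_comm {a : R} (ha : ∀ y ∈ D.N, a * y = y * a) :
    ∀ y ∈ D.M, theta D a * y = y * theta D a := by
  intro y hy
  set c := a * D.e2 * D.e1 with hc
  have hcN : ∀ n ∈ D.N, c * n = n * c := by
    intro n hn
    rw [hc, mul_assoc, D.he1_N n hn, ← mul_assoc, mul_assoc a, D.he2_M n (D.hNM hn),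
      ← mul_assoc, ha n hn]
    noncomm_ring
  have ht : theta D a = ∑ i, D.xb i * c * D.yb i := by
    simp only [theta, hc, mul_assoc]
  have hl : y * theta D a
      = ∑ i, ∑ j, D.xb j * (D.E (D.yb j * (y * D.xb i)) * c) * D.yb i := by
    rw [ht, Finset.mul_sum]
    refine Finset.sum_congr rfl fun i _ => ?_
    rw [show y * (D.xb i * c * D.yb i) = (y * D.xb i) * (c * D.yb i) by noncomm_ring]
    conv_lhs => rw [← D.hdual2 _ (mul_mem hy (D.hxb i)), Finset.sum_mul]
    exact Finset.sum_congr rfl fun j _ => by noncomm_ring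
  have hr : theta D a * y
      = ∑ j, ∑ i, D.xb j * (c * D.E (D.yb j * y * D.xb i)) * D.yb i := by
    rw [ht, Finset.sum_mul]
    refine Finset.sum_congr rfl fun j _ => ?_
    rw [show D.xb j * c * D.yb j * y = (D.xb j * c) * (D.yb j * y) by noncomm_ring]
    conv_lhs => rw [← D.hdual1 _ (mul_mem (D.hyb j) hy), Finset.mul_sum]
    exact Finset.sum_congr rfl fun i _ => by noncomm_ring
  rw [hl, hr, Finset.sum_comm]
  refine Finset.sum_congr rfl fun j _ => Finset.sum_congr rfl fun i _ => ?_
  rw [← mul_assoc (D.yb _) y, hcN _ (D.hE_mem _ (mul_mem (mul_mem (D.hyb _) hy) (D.hxb _)))]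

theorem phi_theta {a : R} (ha1 : a ∈ D.M1) (ha : ∀ y ∈ D.N, a * y = y * a) :
    phi D (theta D a) = D.lam ^ 2 • a := by
  have h : theta D a * D.e1 * D.e2 = a * (D.e2 * D.e1 * D.e2) := by
    have h1 : theta D a * D.e1 = a * (D.e2 * D.e1) := by
      rw [theta, Finset.sum_mul]
      have : ∀ i, D.xb i * a * D.e2 * D.e1 * D.yb i * D.e1
          = D.xb i * D.E (D.yb i * 1) * (a * (D.e2 * D.e1)) := by
        intro i
        have hn := D.hE_mem _ (D.hyb i)
        calc _ = D.xb i * a * D.e2 * (D.e1 * D.yb i * D.e1) := by noncomm_ring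
          _ = D.xb i * a * (D.e2 * D.E (D.yb i)) * D.e1 := by
              rw [D.he1_jones _ (D.hyb i), D.he1_jones' _ (D.hyb i)]; noncomm_ring
          _ = D.xb i * (a * D.E (D.yb i)) * D.e2 * D.e1 := by
              rw [D.he2_M _ (D.hNM hn)]; noncomm_ring
          _ = _ := by rw [ha _ hn, mul_one]; noncomm_ring
      simp_rw [this]
      rw [← Finset.sum_mul, D.hdual2 1 (one_mem _), one_mul]
    rw [h1]; noncomm_ring
  change D.EM1 _ = _
  rw [h, D.hbraid2, mul_smul_comm, map_smul, EM1_e2 D ha1, smul_smul, pow_two]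

/-! ### Slices of the comultiplication -/

/-- Linear maps agreeing on the products `m e₁ m'` agree on `M₁ = M e₁ M`. -/
theorem M1_ind {W : Type*} [AddCommGroup W] [Module k W] (F G : R →ₗ[k] W)
    (h : ∀ m ∈ D.M, ∀ m' ∈ D.M, F (m * D.e1 * m') = G (m * D.e1 * m')) :
    ∀ x ∈ D.M1, F x = G x := by
  intro x hx
  have hx' : x ∈ Submodule.span k {z : R | ∃ m ∈ D.M, ∃ m' ∈ D.M, z = m * D.e1 * m'} := by
    rw [← D.hM1_gen]; exact hx
  refine LinearMap.eqOn_span (f := F) (g := G) ?_ hx'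
  rintro _ ⟨m, hm, m', hm', rfl⟩
  exact (h m hm m' hm')

/-- Flipping `m e₁ m'` to `m' e₁ m` rewrites the duality pairing with `p` as the trace
form against `φ(p)`. -/
theorem pair_flip {p m m' : R} (hp : ∀ y ∈ D.M, p * y = y * p) (hm : m ∈ D.M) (hm' : m' ∈ D.M) :
    D.T (m * D.e1 * m' * D.e2 * D.e1 * D.w * p) = D.T (phi D p * (m' * D.e1 * m * D.w)) := by
  have hmem : m' * D.e1 * m * D.w ∈ D.M1 :=
    mul_mem (mul_mem (mul_mem (D.hMM1 hm') D.he1_mem) (D.hMM1 hm)) D.hw_mem.1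
  change _ = D.T (D.EM1 _ * _)
  rw [← D.hEM1_right _ hmem, D.hTEM1]
  calc _ = D.T (m * (D.e1 * m' * D.e2 * D.e1 * D.w * p)) := by simp only [mul_assoc]
    _ = D.T ((D.e1 * (m' * D.e2) * D.e1) * ((D.w * p) * m)) := by
      rw [D.hT_tr]; simp only [mul_assoc]
    _ = D.T ((D.e1 * (D.e2 * m') * D.e1 * m * D.w) * p) := by
      rw [mulB D D.hw_mem.2 hp m hm, D.he2_M m' hm']; simp only [mul_assoc]
    _ = _ := by rw [D.hT_tr]; simp only [mul_assoc]

/-- The slice `q = b₍₁₎ ⟨φ(β), b₍₂₎⟩` has `φ(q) = λ⁴ E_{M₁}(b e₁ β)` (for the pairing without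
its factor `λ⁻²`): by non-degeneracy `q` is the element of `B` with this image under `φ`. -/
theorem phi_slice {b β q : R} (hb : ∀ y ∈ D.M, b * y = y * b) (hβ : ∀ y ∈ D.M, β * y = y * β)
    (hq : ∀ y ∈ D.M, q * y = y * q)
    (h : ∀ a ∈ D.M1, (∀ y ∈ D.N, a * y = y * a) →
      D.T (a * D.e2 * D.e1 * D.w * q)
        = D.lam ^ 2 * D.T (a * phi D β * D.e2 * D.e1 * D.w * b)) :
    phi D q = D.lam ^ 4 • D.EM1 (b * D.e1 * β) := by
  set c := D.EM1 (b * D.e1 * β) with hc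
  have hc1 : c ∈ D.M1 := D.hEM1_mem _
  have hcN : ∀ y ∈ D.N, c * y = y * c := by
    intro y hy
    refine EM1_comm D (D.hMM1 (D.hNM hy)) ?_
    rw [mul_assoc, hβ y (D.hNM hy), ← mul_assoc, mul_assoc b, D.he1_N y hy, ← mul_assoc,
      hb y (D.hNM hy)]
    noncomm_ring
  set q' := D.lam ^ 2 • theta D c with hq'
  have hq'B : ∀ y ∈ D.M, q' * y = y * q' := by
    intro y hy
    rw [hq', smul_mul_assoc, theta_comm D hcN y hy, mul_smul_comm]
  have hphi : phi D q' = D.lam ^ 4 • c := by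
    rw [hq', map_smul, phi_theta D hc1 hcN, smul_smul]; ring_nf
  have hφ2 : phi D β * D.e2 = D.lam • (β * D.e1 * D.e2) := by
    rw [D.hPP2 (β * D.e1), smul_smul, mul_inv_cancel₀ D.lam_ne, one_smul]; rfl
  have hR : phi D β * D.e2 * D.e1 = D.lam ^ 2 • (β * D.e1) := by
    rw [hφ2, show D.lam • (β * D.e1 * D.e2) * D.e1 = D.lam • (β * (D.e1 * D.e2 * D.e1)) by
      simp only [smul_mul_assoc, mul_assoc], D.hbraid1, mul_smul_comm, smul_smul, pow_two]
  have key : ∀ a ∈ D.M1, D.T (a * D.e2 * D.e1 * D.w * q')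
      = D.lam ^ 4 * D.T (a * (β * D.e1 * D.w * b)) := by
    have := M1_ind D (D.T ∘ₗ LinearMap.mulRight k (D.e2 * D.e1 * D.w * q'))
      (D.lam ^ 4 • (D.T ∘ₗ LinearMap.mulRight k (β * D.e1 * D.w * b))) ?_
    · intro a ha
      have h1 := this a ha
      simp only [LinearMap.comp_apply, LinearMap.mulRight_apply, LinearMap.smul_apply,
        smul_eq_mul] at h1
      rw [← h1]; simp only [mul_assoc]
    · intro m hm m' hm'
      simp only [LinearMap.comp_apply, LinearMap.mulRight_apply, LinearMap.smul_apply,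
        smul_eq_mul]
      have hmem : m' * D.e1 * m * D.w ∈ D.M1 :=
        mul_mem (mul_mem (mul_mem (D.hMM1 hm') D.he1_mem) (D.hMM1 hm)) D.hw_mem.1
      have h1 := pair_flip D hq'B hm hm'
      rw [hphi, smul_mul_assoc, map_smul, hc, ← D.hEM1_right _ hmem, D.hTEM1, smul_eq_mul] at h1
      rw [show m * D.e1 * m' * (D.e2 * D.e1 * D.w * q')
        = m * D.e1 * m' * D.e2 * D.e1 * D.w * q' by simp only [mul_assoc], h1]
      congr 1
      symm
      calc _ = D.T (m * (D.e1 * m' * (β * D.e1 * D.w * b))) := by simp only [mul_assoc]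
        _ = D.T (D.e1 * (m' * β) * D.e1 * ((D.w * b) * m)) := by
          rw [D.hT_tr]; simp only [mul_assoc]
        _ = D.T ((D.e1 * (β * m') * D.e1 * m * D.w) * b) := by
          rw [mulB D D.hw_mem.2 hb m hm, hβ m' hm']; simp only [mul_assoc]
        _ = _ := by rw [D.hT_tr]; simp only [mul_assoc]
  have hqq : q = q' := by
    refine B_ext D hq hq'B fun a ha haN => ?_
    rw [h a ha haN, key a ha, show a * phi D β * D.e2 * D.e1 * D.w * b
      = a * (phi D β * D.e2 * D.e1) * D.w * b by simp only [mul_assoc], hR]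
    simp only [mul_smul_comm, smul_mul_assoc, map_smul, smul_eq_mul, mul_assoc]
    ring
  rw [hqq, hphi]

/-! ### Commutation relations between `B` and `M₁` -/

/-- The commutation relation `b e₁ = (b₍₁₎ ⊳ e₁) b₍₂₎`. -/
theorem comm_e1 {b : R} (hb : ∀ y ∈ D.M, b * y = y * b) (n : ℕ) (b1 b2 : Fin n → R)
    (h1 : ∀ i, ∀ y ∈ D.M, b1 i * y = y * b1 i) (h2 : ∀ i, ∀ y ∈ D.M, b2 i * y = y * b2 i)
    (hΔ : D.Δ b = ∑ i, b1 i ⊗ₜ[k] b2 i) :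
    ∑ s, phi D (b1 s) * b2 s = D.lam • (b * D.e1) := by
  have hexp : ∀ s, b2 s = ∑ i, ∑ l, (D.lam⁻¹ ^ 3 *
      D.T (phi D (D.ub i * D.f1 l * D.winv) * D.e2 * D.e1 * D.w * b2 s)) •
        (D.w * D.f2 l * D.vb i) := by
    intro s
    conv_lhs => rw [← B_dual D (h2 s)]
    refine Finset.sum_congr rfl fun i _ => Finset.sum_congr rfl fun l _ => ?_
    rw [pair_phi D (mulB D (mulB D (D.hub i) (D.hf1 l).2) D.hwinv_mem.2) (h2 s),
      mul_assoc _ D.winv, D.hw_inv.2, mul_one, D.hT_tr (b2 s), ← mul_assoc (D.lam⁻¹ ^ 3),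
      ← mul_pow, inv_mul_cancel₀ D.lam_ne, one_pow, one_mul]
  have hsl : ∀ i l, ∑ s, D.T (phi D (D.ub i * D.f1 l * D.winv) * D.e2 * D.e1 * D.w * b2 s) •
      phi D (b1 s) = D.lam ^ 4 • (D.EM1 (b * D.e1 * D.ub i) * D.f1 l * D.winv) := by
    intro i l
    have hβ := mulB D (mulB D (D.hub i) (D.hf1 l).2) D.hwinv_mem.2
    set β := D.ub i * D.f1 l * D.winv with hβdef
    have := phi_slice D (q := ∑ s, D.T (phi D β * D.e2 * D.e1 * D.w * b2 s) • b1 s) hb hβ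
      (by
        intro y hy
        simp only [Finset.sum_mul, Finset.mul_sum, smul_mul_assoc, mul_smul_comm, h1 _ y hy])
      (by
        intro a ha haN
        have hd := D.hΔ_def a ha haN (phi D β) (phi_mem D β) (phi_comm D hβ) b hb n b1 b2 hΔ
        have hl := D.lam_ne
        have e : ∀ s, (D.lam⁻¹ ^ 2 * D.T (a * D.e2 * D.e1 * D.w * b1 s)) *
            (D.lam⁻¹ ^ 2 * D.T (phi D β * D.e2 * D.e1 * D.w * b2 s))
            = D.lam⁻¹ ^ 4 * (D.T (phi D β * D.e2 * D.e1 * D.w * b2 s) *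
              D.T (a * D.e2 * D.e1 * D.w * b1 s)) := fun s => by ring
        simp_rw [e] at hd
        rw [← Finset.mul_sum] at hd
        simp only [Finset.mul_sum, mul_smul_comm, map_sum, map_smul, smul_eq_mul]
        field_simp at hd
        linear_combination hd)
    rw [map_sum] at this
    simp only [map_smul] at this
    rw [this, ← D.hEM1_right _ (D.hf1 l).1, ← D.hEM1_right _ D.hwinv_mem.1]
    simp only [hβdef, mul_assoc]
  calc _ = ∑ i, ∑ l, D.lam⁻¹ ^ 3 • ((∑ s, D.T (phi D (D.ub i * D.f1 l * D.winv) * D.e2 * D.e1 *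
        D.w * b2 s) • phi D (b1 s)) * (D.w * D.f2 l * D.vb i)) := by
        conv_lhs =>
          enter [2, s]
          rw [hexp s, Finset.mul_sum]
        rw [Finset.sum_comm]
        refine Finset.sum_congr rfl fun i _ => ?_
        simp_rw [Finset.mul_sum]
        rw [Finset.sum_comm]
        refine Finset.sum_congr rfl fun l _ => ?_
        rw [Finset.sum_mul, Finset.smul_sum]
        refine Finset.sum_congr rfl fun s _ => ?_
        rw [mul_smul_comm, smul_mul_assoc, smul_smul]
    _ = ∑ i, D.lam • (D.EM1 (b * D.e1 * D.ub i) * (∑ l, D.f1 l * D.f2 l) * D.vb i) := by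
        refine Finset.sum_congr rfl fun i _ => ?_
        rw [Finset.mul_sum, Finset.sum_mul, Finset.smul_sum]
        refine Finset.sum_congr rfl fun l _ => ?_
        rw [hsl, smul_mul_assoc, smul_smul]
        congr 1
        · have := D.lam_ne
          field_simp
        · calc _ = D.EM1 (b * D.e1 * D.ub i) * D.f1 l * (D.winv * D.w) * D.f2 l * D.vb i := by
                noncomm_ring
            _ = _ := by rw [D.hw_inv.2]; noncomm_ring
    _ = _ := by
        rw [D.hf_one]
        simp_rw [mul_one]
        rw [← Finset.smul_sum, D.hdualB1]

/-- The commutation relation `b y = (b₍₁₎ ⊳ y) b₍₂₎` for `y ∈ M₁`. Since `B` commutes with `M`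
and `M₁ = M e₁ M`, the case `y = e₁` suffices. -/
theorem comm_M1 {b : R} (hb : ∀ y ∈ D.M, b * y = y * b) {y : R} (hy : y ∈ D.M1) :
    LinearMap.mul' k R (TensorProduct.map (actL D y) LinearMap.id (D.Δ b)) = b * y := by
  obtain ⟨n, c, g, hg⟩ := Submodule.mem_span_set'.1 (D.hΔ_mem b hb)
  choose b1 h1 b2 h2 h3 using fun i => (g i).2
  have hΔ : D.Δ b = ∑ i, (c i • b1 i) ⊗ₜ[k] b2 i := by
    rw [← hg]
    exact Finset.sum_congr rfl fun i _ => by rw [h3, TensorProduct.smul_tmul']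
  have h1' : ∀ i, ∀ y ∈ D.M, (c i • b1 i) * y = y * (c i • b1 i) := by
    intro i y hy
    rw [smul_mul_assoc, h1 i y hy, mul_smul_comm]
  have he := comm_e1 D hb n _ b2 h1' h2 hΔ
  rw [hΔ]
  generalize hb1 : (fun i => c i • b1 i) = b1' at *
  have hb1' : ∀ i, c i • b1 i = b1' i := fun i => by rw [← hb1]
  simp only [hb1'] at h1' he ⊢
  simp only [map_sum, TensorProduct.map_tmul, LinearMap.mul'_apply, LinearMap.id_apply]
  change ∑ i, act D (b1' i) y * b2 i = _
  let F : R →ₗ[k] R := ∑ i, D.lam⁻¹ • (LinearMap.mulRight k (b2 i) ∘ₗ D.EM1 ∘ₗ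
    LinearMap.mulRight k D.e2 ∘ₗ LinearMap.mulLeft k (b1' i))
  have hF : ∀ y, F y = ∑ i, act D (b1' i) y * b2 i := by
    intro y
    simp [F, act, LinearMap.sum_apply]
  rw [← hF]
  refine M1_ind D F (LinearMap.mulLeft k b) (fun m hm m' hm' => ?_) y hy
  rw [hF, LinearMap.mulLeft_apply]
  have hact : ∀ i, act D (b1' i) (m * D.e1 * m') * b2 i
      = m * (D.lam⁻¹ • (phi D (b1' i) * b2 i)) * m' := by
    intro i
    have e : b1' i * (m * D.e1 * m') * D.e2 = m * (b1' i * D.e1 * D.e2) * m' := by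
      rw [mul_assoc, mul_assoc (m * D.e1), ← D.he2_M m' hm',
        show b1' i * (m * D.e1 * (D.e2 * m')) = b1' i * m * (D.e1 * D.e2 * m') by noncomm_ring,
        h1' i m hm]
      noncomm_ring
    rw [act, e, D.hEM1_right _ (D.hMM1 hm'), D.hEM1_left _ (D.hMM1 hm)]
    change D.lam⁻¹ • (m * phi D (b1' i) * m') * b2 i = _
    rw [smul_mul_assoc, mul_assoc _ m', ← h2 i m' hm', mul_smul_comm, smul_mul_assoc]
    congr 1
    noncomm_ring
  simp_rw [hact]
  rw [← Finset.sum_mul, ← Finset.mul_sum, ← Finset.smul_sum, he, smul_smul,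
    inv_mul_cancel₀ D.lam_ne, one_smul, ← mul_assoc, ← hb m hm]
  noncomm_ring

end Smash

/-! ### The isomorphism `M₁ # B ≅ M₂` -/

/-- the map `ψ : M₁ # B → M₂`, `x # b ↦ x b`, is an algebra
isomorphism from the smash product of `M₁` by the weak Hopf algebra `B` (with
respect to the action `b ⊳ x = λ⁻¹ E_{M₁}(b x e₂)`) onto `M₂`.
(The smash product `M₁ # B = M₁ ⊗_{B_t} B` with `B_t = V` is presented as the
quotient of the span `P` of `{x ⊗ b | x ∈ M₁, b ∈ B}` by the span `Q` of the
`V`-balancing relators `(x · v) ⊗ b - x ⊗ (v b)` with `x · v = x (v ⊳ 1)`; the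
statement asserts that multiplication induces a linear isomorphism `P/Q ≅ M₂`
which moreover intertwines the smash product multiplication
`(x # b)(y # g) = x (b₍₁₎ ⊳ y) # b₍₂₎ g` with the multiplication of `M₂`.) -/
theorem stmt16 {k : Type*} [Field k] {R : Type*} [Ring R] [Algebra k R] (D : D2H k R) :
    let mul2 : R ⊗[k] R →ₗ[k] R := LinearMap.mul' k R
    let P : Submodule k (R ⊗[k] R) :=
      Submodule.span k {z : R ⊗[k] R | ∃ x ∈ D.M1, ∃ b ∈ D2.B D.toD2S.toD2,
        z = x ⊗ₜ[k] b}
    let Q : Submodule k (R ⊗[k] R) :=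
      Submodule.span k {z : R ⊗[k] R | ∃ x ∈ D.M1, ∃ v ∈ D2.V D.toD2S.toD2,
        ∃ b ∈ D2.B D.toD2S.toD2,
        z = (x * act D v 1) ⊗ₜ[k] b - x ⊗ₜ[k] (v * b)}
    -- ψ is a linear isomorphism M₁ # B = P/Q ≅ M₂
    (Q ≤ P) ∧
    Submodule.map mul2 P = (⊤ : Submodule k R) ∧
    (∀ t ∈ Q, mul2 t = 0) ∧
    (∀ t ∈ P, mul2 t = 0 → t ∈ Q) ∧
    -- ψ intertwines the smash product multiplication with that of M₂
    (∀ x ∈ D.M1, ∀ y ∈ D.M1,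
      ∀ b ∈ D2.B D.toD2S.toD2, ∀ g ∈ D2.B D.toD2S.toD2,
      ∀ (m : ℕ) (b1 b2 : Fin m → R), D.Δ b = ∑ i, b1 i ⊗ₜ[k] b2 i →
        (x * b) * (y * g) = ∑ i, (x * act D (b1 i) y) * (b2 i * g)) := by
  intro mul2 P Q
  have memB : ∀ {b : R}, b ∈ D2.B D.toD2S.toD2 ↔ ∀ y ∈ D.M, b * y = y * b := by
    intro b
    rw [D2.B, Subalgebra.mem_centralizer_iff]
    exact ⟨fun h y hy => (h y hy).symm, fun h y hy => (h y hy).symm⟩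
  have memV : ∀ {v : R}, v ∈ D2.V D.toD2S.toD2 ↔ v ∈ D.M1 ∧ ∀ y ∈ D.M, v * y = y * v := by
    intro v
    rw [D2.V, Algebra.mem_inf, ← memB, D2.B]
  have hQ0 : ∀ t ∈ Q, mul2 t = 0 := by
    intro t ht
    have : Q ≤ LinearMap.ker mul2 := by
      refine Submodule.span_le.2 ?_
      rintro _ ⟨x, hx, v, hv, b, hb, rfl⟩
      rw [SetLike.mem_coe, LinearMap.mem_ker, map_sub, LinearMap.mul'_apply,
        LinearMap.mul'_apply, Smash.act_V D (memV.1 hv).1, mul_assoc, sub_self]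
    exact this ht
  refine ⟨?_, ?_, hQ0, ?_, ?_⟩
  · refine Submodule.span_le.2 ?_
    rintro _ ⟨x, hx, v, hv, b, hb, rfl⟩
    refine Submodule.sub_mem _ (Submodule.subset_span ⟨_, ?_, b, hb, rfl⟩)
      (Submodule.subset_span ⟨x, hx, _, ?_, rfl⟩)
    · rw [Smash.act_V D (memV.1 hv).1]
      exact mul_mem hx (memV.1 hv).1
    · exact mul_mem (memB.2 (memV.1 hv).2) hb
  · rw [eq_top_iff]
    intro r _
    refine ⟨∑ i, D.EM1 (r * D.ub i) ⊗ₜ[k] D.vb i, ?_, ?_⟩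
    · exact Submodule.sum_mem _ fun i _ => Submodule.subset_span
        ⟨_, D.hEM1_mem _, _, memB.2 (D.hvb i), rfl⟩
    · simp only [mul2, map_sum, LinearMap.mul'_apply]
      exact D.hdualB1 r
  · -- modulo `Q`, every `t ∈ P` equals `∑ E_{M₁}(ψ(t) uᵢ) ⊗ vᵢ`, which depends on `ψ(t)` only
    let Φ : R →ₗ[k] R ⊗[k] R := ∑ i, (TensorProduct.mk k R R).flip (D.vb i) ∘ₗ D.EM1 ∘ₗ
      LinearMap.mulRight k (D.ub i)
    have hΦ : ∀ r, Φ r = ∑ i, D.EM1 (r * D.ub i) ⊗ₜ[k] D.vb i := by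
      intro r
      simp [Φ, LinearMap.sum_apply]
    have hle : P ≤ Q.comap (Φ ∘ₗ mul2 - LinearMap.id) := by
      refine Submodule.span_le.2 ?_
      rintro _ ⟨x, hx, b, hb, rfl⟩
      rw [SetLike.mem_coe, Submodule.mem_comap]
      have hbM := memB.1 hb
      have e : x ⊗ₜ[k] b = ∑ i, x ⊗ₜ[k] (D.EM1 (b * D.ub i) * D.vb i) := by
        rw [← TensorProduct.tmul_sum, D.hdualB1]
      rw [LinearMap.sub_apply, LinearMap.comp_apply, LinearMap.id_apply, hΦ,
        LinearMap.mul'_apply, e, ← Finset.sum_sub_distrib]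
      refine Submodule.sum_mem _ fun i _ => Submodule.subset_span
        ⟨x, hx, D.EM1 (b * D.ub i), memV.2 ⟨D.hEM1_mem _, ?_⟩, D.vb i, memB.2 (D.hvb i), ?_⟩
      · exact fun y hy => Smash.EM1_comm D (D.hMM1 hy) (Smash.mulB D hbM (D.hub i) y hy)
      · rw [Smash.act_V D (D.hEM1_mem _), mul_assoc x, D.hEM1_left x hx]
    intro t ht h0
    have h1 := hle ht
    rw [Submodule.mem_comap, LinearMap.sub_apply, LinearMap.comp_apply, h0, map_zero,
      LinearMap.id_apply, zero_sub] at h1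
    exact (Submodule.neg_mem_iff Q).1 h1
  · intro x hx y hy b hb g hg m b1 b2 hΔ
    have h := Smash.comm_M1 D (memB.1 hb) hy
    rw [hΔ] at h
    simp only [map_sum, TensorProduct.map_tmul, LinearMap.mul'_apply, LinearMap.id_apply] at h
    change ∑ i, act D (b1 i) y * b2 i = _ at h
    rw [show x * b * (y * g) = x * (b * y) * g by noncomm_ring, ← h, Finset.mul_sum,
      Finset.sum_mul]
    exact Finset.sum_congr rfl fun i _ => by noncomm_ring
end
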